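/- arXiv:2112.06518 — 12 statements merged into one kernel-verified Lean document; each statement's English description precedes it below -/
import Mathlib

section
/- Let (𝒢, β) be a fractional partition of [M] and let A_1, …, A_M be nonempty compact subsets of ℝ^d. Then |A_1 + ⋯ + A_M| ≥ Σ_{S∈𝒢} β_S · |Σ_{i∈S} A_i|, i.e., the volume functional is fractionally superadditive with respect to Minkowski summation on compact subsets of ℝ^d. -/
open Pointwise MeasureTheory

namespace FSA

/-- The `k`-th threshold of the index set `S`: use the maxima `b` below `k`, the minima `a` above. -/
noncomputable def thr {M : ℕ} (a b : Fin M → ℝ) (S : Finset (Fin M)) (k : ℕ) : ℝ :=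
  ∑ j ∈ S, if (j : ℕ) < k then b j else a j

lemma thr_mono {M : ℕ} (a b : Fin M → ℝ) (hab : ∀ i, a i ≤ b i) (S : Finset (Fin M)) :
    Monotone (thr a b S) := by
  intro k l hkl
  unfold thr
  refine Finset.sum_le_sum fun j _ => ?_
  have := hab j
  split_ifs <;> first | linarith | omega

lemma thr_succ_of_notMem {M : ℕ} (a b : Fin M → ℝ) (S : Finset (Fin M)) (i : Fin M)
    (hi : i ∉ S) : thr a b S (i + 1) = thr a b S i := by
  unfold thr
  refine Finset.sum_congr rfl fun j hj => ?_
  have : (j : ℕ) ≠ i := fun h => hi (Fin.ext h ▸ hj)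
  split_ifs <;> first | rfl | omega

lemma thr_cover {M : ℕ} (a b : Fin M → ℝ) (S : Finset (Fin M)) (y : ℝ)
    (h0 : ∑ j ∈ S, a j ≤ y) (h1 : y < ∑ j ∈ S, b j) :
    ∃ i ∈ S, thr a b S i ≤ y ∧ y < thr a b S (i + 1) := by
  have hM : y < thr a b S M := by simpa [thr] using h1
  have hex : ∃ k, y < thr a b S k := ⟨M, hM⟩
  classical
  have hspec := Nat.find_spec hex
  have hle : Nat.find hex ≤ M := Nat.find_min' hex hM
  obtain ⟨k, hk⟩ : ∃ k, Nat.find hex = k + 1 := by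
    refine Nat.exists_eq_succ_of_ne_zero fun h => ?_
    rw [h] at hspec
    simp [thr] at hspec
    linarith
  have hnot : ¬ y < thr a b S k := Nat.find_min hex (by omega)
  rw [hk] at hspec
  have hkM : k < M := by omega
  refine ⟨⟨k, hkM⟩, ?_, not_lt.1 hnot, hspec⟩
  by_contra hmem
  have := thr_succ_of_notMem a b S ⟨k, hkM⟩ hmem
  simp only at this
  rw [this] at hspec
  exact hnot hspec

lemma compact_sum {M d : ℕ} (A : Fin M → Set (Fin d → ℝ)) (hcpt : ∀ i, IsCompact (A i))
    (S : Finset (Fin M)) : IsCompact (∑ i ∈ S, A i) := by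
  classical
  induction S using Finset.induction_on with
  | empty => simpa using isCompact_singleton (x := (0 : Fin d → ℝ))
  | insert i S hi ih => rw [Finset.sum_insert hi]; exact (hcpt i).add ih

end FSA

/-- Fractional superadditivity of volume with respect to Minkowski summation
on compact subsets of `ℝ^d` (Theorem `thm:FSA` / `th:Rd`). -/
theorem volume_fractionally_superadditive
    (d M : ℕ) (hd : 1 ≤ d) (hM : 1 ≤ M)
    (A : Fin M → Set (Fin d → ℝ))
    (hne : ∀ i, (A i).Nonempty)
    (hcpt : ∀ i, IsCompact (A i))
    (𝒢 : Finset (Finset (Fin M)))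
    (β : Finset (Fin M) → ℝ)
    (h𝒢 : ∀ S ∈ 𝒢, S.Nonempty)
    (hβ : ∀ S ∈ 𝒢, 0 ≤ β S)
    (hfrac : ∀ i : Fin M, ∑ S ∈ 𝒢.filter (fun S => i ∈ S), β S = 1) :
    ∑ S ∈ 𝒢, β S * (volume (∑ i ∈ S, A i)).toReal
      ≤ (volume (∑ i : Fin M, A i)).toReal := by
  classical
  have z : Fin d := ⟨0, hd⟩
  have hmin : ∀ i, ∃ p ∈ A i, ∀ x ∈ A i, p z ≤ x z := fun i => by
    obtain ⟨p, hp, h⟩ := (hcpt i).exists_isMinOn (hne i) (continuous_apply z).continuousOn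
    exact ⟨p, hp, fun x hx => h hx⟩
  have hmax : ∀ i, ∃ p ∈ A i, ∀ x ∈ A i, x z ≤ p z := fun i => by
    obtain ⟨p, hp, h⟩ := (hcpt i).exists_isMaxOn (hne i) (continuous_apply z).continuousOn
    exact ⟨p, hp, fun x hx => h hx⟩
  choose p hpA hp using hmin
  choose q hqA hq using hmax
  set a : Fin M → ℝ := fun i => p i z with ha
  set b : Fin M → ℝ := fun i => q i z with hb
  have hab : ∀ i, a i ≤ b i := fun i => hp i _ (hqA i)
  set t := FSA.thr a b with ht
  set G : Finset (Fin M) → Fin M → Set (Fin d → ℝ) :=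
    fun S i => {x | t S i ≤ x z ∧ x z < t S (i + 1)} with hG
  have hGm : ∀ S i, MeasurableSet (G S i) := fun S i =>
    (measurableSet_le measurable_const (measurable_pi_apply z)).inter
      (measurableSet_lt (measurable_pi_apply z) measurable_const)
  have hfin : ∀ S, volume (∑ i ∈ S, A i) ≠ ⊤ := fun S =>
    (FSA.compact_sum A hcpt S).measure_lt_top.ne
  -- translating a slab piece into the full sum
  have hpiece : ∀ S : Finset (Fin M), ∀ i ∈ S,
      volume ((∑ j ∈ S, A j) ∩ G S i) ≤ volume ((∑ j, A j) ∩ G Finset.univ i) := by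
    intro S i hi
    set r : Fin M → (Fin d → ℝ) := fun j => if (j : ℕ) < i then q j else p j with hr
    set c : Fin d → ℝ := ∑ j ∈ Sᶜ, r j with hc
    have hcz : c z = t Sᶜ i := by
      simp only [hc, ht, FSA.thr, Finset.sum_apply, hr, ha, hb]
      exact Finset.sum_congr rfl fun j _ => by split_ifs <;> rfl
    have hcz' : t Sᶜ (i + 1) = c z := by
      rw [hcz]; exact FSA.thr_succ_of_notMem a b Sᶜ i (by simpa using hi)
    have hadd : ∀ k, t Finset.univ k = t S k + t Sᶜ k := fun k =>
      (Finset.sum_add_sum_compl S _).symm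
    have hcA : c ∈ ∑ j ∈ Sᶜ, A j := by
      refine Set.finsetSum_mem_finsetSum _ _ _ fun j _ => ?_
      simp only [hr]
      split_ifs
      · exact hqA j
      · exact hpA j
    rw [← measure_preimage_add_right volume (-c)]
    refine measure_mono ?_
    rintro x ⟨hx, hx1, hx2⟩
    have hxz : (x + -c) z = x z - c z := by simp [sub_eq_add_neg]
    beta_reduce at hx hx1 hx2
    rw [hxz] at hx1 hx2
    refine ⟨?_, ?_, ?_⟩
    · rw [← Finset.sum_add_sum_compl S]
      have := Set.add_mem_add hx hcA
      simpa using this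
    · rw [hadd, ← hcz]; linarith
    · rw [hadd, hcz']; linarith
  have hcover : ∀ S : Finset (Fin M),
      volume (∑ j ∈ S, A j) ≤ ∑ i ∈ S, volume ((∑ j, A j) ∩ G Finset.univ i) := by
    intro S
    have hsub : (∑ j ∈ S, A j) ⊆
        (⋃ i ∈ S, (∑ j ∈ S, A j) ∩ G S i) ∪ {x | x z = ∑ j ∈ S, b j} := by
      intro x hx
      obtain ⟨g, hg, rfl⟩ := (Set.mem_finsetSum _ _ _).1 hx
      have h0 : ∑ j ∈ S, a j ≤ (∑ j ∈ S, g j) z := by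
        rw [Finset.sum_apply]; exact Finset.sum_le_sum fun j hj => hp j _ (hg hj)
      have h1 : (∑ j ∈ S, g j) z ≤ ∑ j ∈ S, b j := by
        rw [Finset.sum_apply]; exact Finset.sum_le_sum fun j hj => hq j _ (hg hj)
      rcases h1.lt_or_eq with h1 | h1
      · left
        obtain ⟨i, hi, h⟩ := FSA.thr_cover a b S _ h0 h1
        exact Set.mem_biUnion hi ⟨hx, h⟩
      · right; exact h1
    have hnull : volume {x : Fin d → ℝ | x z = ∑ j ∈ S, b j} = 0 :=
      Measure.pi_hyperplane (fun _ => volume) z _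
    calc volume (∑ j ∈ S, A j) ≤ _ := measure_mono hsub
      _ ≤ _ := measure_union_le _ _
      _ = volume (⋃ i ∈ S, (∑ j ∈ S, A j) ∩ G S i) := by rw [hnull, add_zero]
      _ ≤ ∑ i ∈ S, volume ((∑ j ∈ S, A j) ∩ G S i) := measure_biUnion_finset_le _ _
      _ ≤ _ := Finset.sum_le_sum fun i hi => hpiece S i hi
  set V : Fin M → ENNReal := fun i => volume ((∑ j, A j) ∩ G Finset.univ i) with hV
  have hVfin : ∀ i, V i ≠ ⊤ := fun i =>
    ne_top_of_le_ne_top (hfin Finset.univ) (measure_mono Set.inter_subset_left)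
  have htot : ∑ i, V i ≤ volume (∑ j, A j) := by
    have hmeas : MeasurableSet (∑ j, A j) :=
      (FSA.compact_sum A hcpt Finset.univ).isClosed.measurableSet
    have hdisj : Set.PairwiseDisjoint (↑(Finset.univ : Finset (Fin M)))
        (fun i => (∑ j, A j) ∩ G Finset.univ i) := by
      intro i _ j _ hij
      refine Set.disjoint_left.2 ?_
      rintro x ⟨_, h1, h2⟩ ⟨_, h3, h4⟩
      have hm := FSA.thr_mono a b hab Finset.univ
      rcases lt_or_gt_of_ne hij with h | h
      · have := hm (show (i : ℕ) + 1 ≤ j from h)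
        exact absurd (h2.trans_le this) (not_lt.2 h3)
      · have := hm (show (j : ℕ) + 1 ≤ i from h)
        exact absurd (h4.trans_le this) (not_lt.2 h1)
    rw [← measure_biUnion_finset hdisj (fun i _ => hmeas.inter (hGm _ i))]
    exact measure_mono (Set.iUnion₂_subset fun i _ => Set.inter_subset_left)
  have hcoverR : ∀ S : Finset (Fin M),
      (volume (∑ j ∈ S, A j)).toReal ≤ ∑ i ∈ S, (V i).toReal := by
    intro S
    rw [← ENNReal.toReal_sum fun i _ => hVfin i]
    exact ENNReal.toReal_mono (ENNReal.sum_ne_top.2 fun i _ => hVfin i) (hcover S)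
  calc ∑ S ∈ 𝒢, β S * (volume (∑ i ∈ S, A i)).toReal
      ≤ ∑ S ∈ 𝒢, β S * ∑ i ∈ S, (V i).toReal :=
        Finset.sum_le_sum fun S hS => mul_le_mul_of_nonneg_left (hcoverR S) (hβ S hS)
    _ = ∑ S ∈ 𝒢, ∑ i, if i ∈ S then β S * (V i).toReal else 0 := by
        refine Finset.sum_congr rfl fun S _ => ?_
        rw [Finset.mul_sum, Finset.sum_ite_mem, Finset.univ_inter]
    _ = ∑ i, ∑ S ∈ 𝒢, if i ∈ S then β S * (V i).toReal else 0 := Finset.sum_comm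
    _ = ∑ i, (V i).toReal := by
        refine Finset.sum_congr rfl fun i _ => ?_
        rw [← Finset.sum_filter, ← Finset.sum_mul, hfrac i, one_mul]
    _ = (∑ i, V i).toReal := (ENNReal.toReal_sum fun i _ => hVfin i).symm
    _ ≤ _ := ENNReal.toReal_mono (hfin _) htot
end

section
/- Let (𝒢, β) be a fractional partition of [M] and let A_1, …, A_M be nonempty compact subsets of ℝ. If every S ∈ 𝒢 with β_S > 0 is such that Σ_{i∈S} A_i is an interval (a convex subset of ℝ), then |A_1 + ⋯ + A_M| = Σ_{S∈𝒢} β_S · |Σ_{i∈S} A_i|. -/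
open Pointwise MeasureTheory

theorem icc_add_compact {a b : ℝ} (hab : a ≤ b) {B : Set ℝ} {m n : ℝ} (hm : IsLeast B m)
    (hn : IsGreatest B n) (h : n - m ≤ b - a) :
    Set.Icc a b + B = Set.Icc (a + m) (b + n) := by
  ext x
  constructor
  · rintro ⟨y, hy, z, hz, rfl⟩
    exact ⟨add_le_add hy.1 (hm.2 hz), add_le_add hy.2 (hn.2 hz)⟩
  · rintro ⟨h1, h2⟩
    by_cases hx : x ≤ b + m
    · exact ⟨x - m, ⟨by linarith, by linarith⟩, m, hm.1, by simp⟩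
    · exact ⟨x - n, ⟨by linarith, by linarith⟩, n, hn.1, by simp⟩

theorem sum_bounds {ι : Type*} [DecidableEq ι] (A : ι → Set ℝ) (m n : ι → ℝ)
    (hm : ∀ i, IsLeast (A i) (m i)) (hn : ∀ i, IsGreatest (A i) (n i)) (S : Finset ι) :
    IsLeast (∑ i ∈ S, A i) (∑ i ∈ S, m i) ∧ IsGreatest (∑ i ∈ S, A i) (∑ i ∈ S, n i) := by
  induction S using Finset.induction_on with
  | empty => simp [IsLeast, IsGreatest, lowerBounds, upperBounds]
  | insert i S hi ih =>
    simp only [Finset.sum_insert hi]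
    refine ⟨⟨Set.add_mem_add (hm i).1 ih.1.1, ?_⟩, ⟨Set.add_mem_add (hn i).1 ih.2.1, ?_⟩⟩
    · rintro _ ⟨y, hy, z, hz, rfl⟩
      exact add_le_add ((hm i).2 hy) (ih.1.2 hz)
    · rintro _ ⟨y, hy, z, hz, rfl⟩
      exact add_le_add ((hn i).2 hy) (ih.2.2 hz)

/-- Equality case of fractional superadditivity in dimension 1: if every set of the
fractional partition with positive weight has a Minkowski subset sum which is an
interval (i.e. a convex subset of `ℝ`), then equality holds. -/
theorem volume_fractional_superadditivity_eq_of_intervals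
    (M : ℕ) (hM : 1 ≤ M)
    (A : Fin M → Set ℝ)
    (hne : ∀ i, (A i).Nonempty)
    (hcpt : ∀ i, IsCompact (A i))
    (𝒢 : Finset (Finset (Fin M)))
    (β : Finset (Fin M) → ℝ)
    (h𝒢 : ∀ S ∈ 𝒢, S.Nonempty)
    (hβ : ∀ S ∈ 𝒢, 0 ≤ β S)
    (hfrac : ∀ i : Fin M, ∑ S ∈ 𝒢.filter (fun S => i ∈ S), β S = 1)
    (hint : ∀ S ∈ 𝒢, 0 < β S → Convex ℝ (∑ i ∈ S, A i)) :
    (volume (∑ i : Fin M, A i)).toReal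
      = ∑ S ∈ 𝒢, β S * (volume (∑ i ∈ S, A i)).toReal := by
  choose m hm using fun i => (hcpt i).exists_isLeast (hne i)
  choose n hn using fun i => (hcpt i).exists_isGreatest (hne i)
  have hmn : ∀ i, m i ≤ n i := fun i => (hm i).2 (hn i).1
  have hS : ∀ S ∈ 𝒢, 0 < β S →
      ∑ i ∈ S, A i = Set.Icc (∑ i ∈ S, m i) (∑ i ∈ S, n i) := by
    intro S hS hpos
    obtain ⟨h1, h2⟩ := sum_bounds A m n hm hn S
    apply Set.Subset.antisymm
    · exact fun x hx => ⟨h1.2 hx, h2.2 hx⟩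
    · exact (hint S hS hpos).ordConnected.out h1.1 h2.1
  have hcov : ∀ i : Fin M, ∃ S ∈ 𝒢.filter (fun S => 0 < β S), i ∈ S := by
    intro i
    by_contra hcon
    push Not at hcon
    have h0 : ∑ S ∈ 𝒢.filter (fun S => i ∈ S), β S ≤ 0 := by
      apply Finset.sum_nonpos
      intro S hSm
      rw [Finset.mem_filter] at hSm
      by_contra hlt
      exact hcon S (Finset.mem_filter.2 ⟨hSm.1, not_le.1 hlt⟩) hSm.2
    rw [hfrac i] at h0
    linarith
  obtain ⟨S0, hS0, -⟩ := hcov ⟨0, hM⟩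
  obtain ⟨S, hSP, hmax⟩ := Finset.exists_max_image (𝒢.filter (fun S => 0 < β S))
    (fun S => ∑ i ∈ S, (n i - m i)) ⟨S0, hS0⟩
  rw [Finset.mem_filter] at hSP
  have hd : ∀ j, n j - m j ≤ ∑ i ∈ S, (n i - m i) := by
    intro j
    obtain ⟨T, hT, hj⟩ := hcov j
    exact (Finset.single_le_sum (f := fun i => n i - m i)
      (fun i _ => sub_nonneg.2 (hmn i)) hj).trans (hmax T hT)
  have key : ∀ T : Finset (Fin M), Disjoint S T → ∑ i ∈ S ∪ T, A i =
      Set.Icc (∑ i ∈ S ∪ T, m i) (∑ i ∈ S ∪ T, n i) := by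
    intro T
    induction T using Finset.induction_on with
    | empty => intro _; simpa using hS S hSP.1 hSP.2
    | insert j T hj ih =>
      intro hdis
      rw [Finset.disjoint_insert_right] at hdis
      have hj' : j ∉ S ∪ T := by simp [hj, hdis.1]
      rw [Finset.union_insert, Finset.sum_insert hj', Finset.sum_insert hj',
        Finset.sum_insert hj', ih hdis.2, add_comm (A j), add_comm (m j), add_comm (n j)]
      refine icc_add_compact (Finset.sum_le_sum fun i _ => hmn i) (hm j) (hn j) ?_
      rw [← Finset.sum_sub_distrib]
      exact (hd j).trans (Finset.sum_le_sum_of_subset_of_nonneg Finset.subset_union_left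
        (fun i _ _ => sub_nonneg.2 (hmn i)))
  have hfull := key Sᶜ disjoint_compl_right
  rw [Finset.union_compl] at hfull
  have hvol : ∀ T : Finset (Fin M), (volume (Set.Icc (∑ i ∈ T, m i) (∑ i ∈ T, n i))).toReal
      = ∑ i ∈ T, (n i - m i) := by
    intro T
    rw [Real.volume_Icc, ENNReal.toReal_ofReal, Finset.sum_sub_distrib]
    exact sub_nonneg.2 (Finset.sum_le_sum fun i _ => hmn i)
  rw [hfull, hvol]
  have hR : ∀ T ∈ 𝒢, β T * (volume (∑ i ∈ T, A i)).toReal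
      = ∑ i : Fin M, if i ∈ T then β T * (n i - m i) else 0 := by
    intro T hT
    rw [Finset.sum_ite_mem, Finset.univ_inter, ← Finset.mul_sum]
    rcases (hβ T hT).eq_or_lt with h | h
    · simp [← h]
    · rw [hS T hT h, hvol]
  rw [Finset.sum_congr rfl hR, Finset.sum_comm]
  refine Finset.sum_congr rfl fun i _ => ?_
  rw [← Finset.sum_filter, ← Finset.sum_mul, hfrac i, one_mul]
end

section
/- Let (𝒢, β) be a fractional partition of [M] and let A_1, …, A_M be nonempty finite subsets of ℤ. Then |A_1 + ⋯ + A_M| − 1 ≥ Σ_{S∈𝒢} β_S · (|Σ_{i∈S} A_i| − 1), where |·| denotes cardinality. -/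
open Pointwise

/-- threshold: maxima for indices below `j`, minima for the others -/
def thr {M : ℕ} (lo hi : Fin M → ℤ) (S : Finset (Fin M)) (j : ℕ) : ℤ :=
  ∑ i ∈ S, if i.val < j then hi i else lo i

/-- number of elements of the subset sum up to the threshold -/
def cnt {M : ℕ} (A : Fin M → Finset ℤ) (lo hi : Fin M → ℤ) (S : Finset (Fin M)) (j : ℕ) : ℕ :=
  ((∑ i ∈ S, A i).filter (fun x => x ≤ thr lo hi S j)).card

section
variable {M : ℕ} {A : Fin M → Finset ℤ} {lo hi : Fin M → ℤ}

theorem mem_subset_sum (S : Finset (Fin M)) (x : ℤ) :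
    x ∈ ∑ i ∈ S, A i ↔ ∃ (g : Fin M → ℤ) (_ : ∀ {i}, i ∈ S → g i ∈ A i), ∑ i ∈ S, g i = x := by
  rw [← Finset.mem_coe, Finset.coe_sum, Set.mem_finset_sum]
  simp only [Finset.mem_coe]

theorem thr_mem (hlo : ∀ i, lo i ∈ A i) (hhi : ∀ i, hi i ∈ A i) (S : Finset (Fin M)) (j : ℕ) :
    thr lo hi S j ∈ ∑ i ∈ S, A i := by
  rw [mem_subset_sum]
  refine ⟨fun i => if i.val < j then hi i else lo i, ?_, rfl⟩
  intro i _
  dsimp only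
  split_ifs
  · exact hhi i
  · exact hlo i

theorem thr_succ_of_notMem (S : Finset (Fin M)) (j : Fin M) (hj : j ∉ S) :
    thr lo hi S (j.val + 1) = thr lo hi S j.val := by
  unfold thr
  refine Finset.sum_congr rfl fun i hi' => ?_
  have hne : i ≠ j := fun h => hj (h ▸ hi')
  have hv : i.val ≠ j.val := fun h => hne (Fin.ext h)
  have : (i.val < j.val + 1) ↔ i.val < j.val := by omega
  simp only [this]

theorem thr_univ (S : Finset (Fin M)) (j : ℕ) :
    thr lo hi S j + thr lo hi Sᶜ j = thr lo hi Finset.univ j := by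
  unfold thr
  exact Finset.sum_add_sum_compl S _

theorem thr_mono (hlh : ∀ i, lo i ≤ hi i) (S : Finset (Fin M)) (j : ℕ) :
    thr lo hi S j ≤ thr lo hi S (j + 1) := by
  unfold thr
  refine Finset.sum_le_sum fun i _ => ?_
  have := hlh i
  split_ifs <;> omega

theorem cnt_zero (hlo : ∀ i, lo i ∈ A i) (hhi : ∀ i, hi i ∈ A i)
    (hmin : ∀ i, ∀ x ∈ A i, lo i ≤ x) (S : Finset (Fin M)) : cnt A lo hi S 0 = 1 := by
  unfold cnt
  rw [Finset.card_eq_one]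
  refine ⟨thr lo hi S 0, ?_⟩
  ext x
  simp only [Finset.mem_filter, Finset.mem_singleton]
  constructor
  · rintro ⟨hx, hle⟩
    refine le_antisymm hle ?_
    rw [mem_subset_sum] at hx
    obtain ⟨g, hg, rfl⟩ := hx
    unfold thr
    refine Finset.sum_le_sum fun i hi' => ?_
    simpa using hmin i _ (hg hi')
  · rintro rfl
    exact ⟨thr_mem hlo hhi S 0, le_rfl⟩

theorem cnt_last (hmax : ∀ i, ∀ x ∈ A i, x ≤ hi i) (S : Finset (Fin M)) :
    cnt A lo hi S M = (∑ i ∈ S, A i).card := by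
  unfold cnt
  rw [Finset.filter_true_of_mem]
  intro x hx
  rw [mem_subset_sum] at hx
  obtain ⟨g, hg, rfl⟩ := hx
  unfold thr
  refine Finset.sum_le_sum fun i hi' => ?_
  simpa using hmax i _ (hg hi')

theorem cnt_diff (hlh : ∀ i, lo i ≤ hi i) (S : Finset (Fin M)) (j : ℕ) :
    (cnt A lo hi S (j + 1) : ℝ) - cnt A lo hi S j =
      ((∑ i ∈ S, A i).filter
        (fun x => thr lo hi S j < x ∧ x ≤ thr lo hi S (j + 1))).card := by
  have hm := thr_mono hlh S j
  have h : cnt A lo hi S (j + 1) = cnt A lo hi S j + ((∑ i ∈ S, A i).filter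
        (fun x => thr lo hi S j < x ∧ x ≤ thr lo hi S (j + 1))).card := by
    unfold cnt
    rw [← Finset.card_union_of_disjoint]
    · congr 1
      ext x
      simp only [Finset.mem_filter, Finset.mem_union]
      constructor
      · rintro ⟨a, b⟩
        rcases le_or_gt x (thr lo hi S j) with h | h
        · exact Or.inl ⟨a, h⟩
        · exact Or.inr ⟨a, h, b⟩
      · rintro (⟨a, b⟩ | ⟨a, b, c⟩)
        · exact ⟨a, b.trans hm⟩
        · exact ⟨a, c⟩
    · rw [Finset.disjoint_left]
      intro x hx hy
      simp only [Finset.mem_filter] at hx hy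
      omega
  rw [h]
  push_cast
  ring

theorem cnt_diff_le (hlo : ∀ i, lo i ∈ A i) (hhi : ∀ i, hi i ∈ A i)
    (hlh : ∀ i, lo i ≤ hi i) (S : Finset (Fin M)) (j : Fin M) (hj : j ∈ S) :
    (cnt A lo hi S (j.val + 1) : ℝ) - cnt A lo hi S j.val ≤
      (cnt A lo hi Finset.univ (j.val + 1) : ℝ) - cnt A lo hi Finset.univ j.val := by
  rw [cnt_diff hlh, cnt_diff hlh]
  norm_cast
  refine Finset.card_le_card_of_injOn (fun x => x + thr lo hi Sᶜ j.val) ?_ ?_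
  · intro x hx
    simp only [Finset.coe_filter, Set.mem_ofPred_eq] at hx ⊢
    obtain ⟨hx, h1, h2⟩ := hx
    have e1 := thr_univ (lo := lo) (hi := hi) S j.val
    have e2 := thr_univ (lo := lo) (hi := hi) S (j.val + 1)
    have e3 := thr_succ_of_notMem (lo := lo) (hi := hi) Sᶜ j (by simpa using hj)
    refine ⟨?_, by omega, by omega⟩
    rw [← Finset.sum_add_sum_compl S A]
    exact Finset.add_mem_add hx (thr_mem hlo hhi _ _)
  · intro x _ y _ h
    simpa using h

theorem card_tele (hlo : ∀ i, lo i ∈ A i) (hhi : ∀ i, hi i ∈ A i)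
    (hmin : ∀ i, ∀ x ∈ A i, lo i ≤ x) (hmax : ∀ i, ∀ x ∈ A i, x ≤ hi i)
    (S : Finset (Fin M)) :
    ((∑ i ∈ S, A i).card : ℝ) - 1 =
      ∑ j : Fin M, ((cnt A lo hi S (j.val + 1) : ℝ) - cnt A lo hi S j.val) := by
  rw [Fin.sum_univ_eq_sum_range (fun j => (cnt A lo hi S (j + 1) : ℝ) - cnt A lo hi S j) M,
    Finset.sum_range_sub (fun j => (cnt A lo hi S j : ℝ)) M, cnt_zero hlo hhi hmin,
    cnt_last hmax]
  simp

end

/-- Theorem `th:Z`: fractional superadditivity of (cardinality minus one) for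
Minkowski sums of finite subsets of the integers. -/
theorem card_sub_one_fractionally_superadditive
    (M : ℕ) (hM : 1 ≤ M)
    (A : Fin M → Finset ℤ)
    (hne : ∀ i, (A i).Nonempty)
    (𝒢 : Finset (Finset (Fin M)))
    (β : Finset (Fin M) → ℝ)
    (h𝒢 : ∀ S ∈ 𝒢, S.Nonempty)
    (hβ : ∀ S ∈ 𝒢, 0 ≤ β S)
    (hfrac : ∀ i : Fin M, ∑ S ∈ 𝒢.filter (fun S => i ∈ S), β S = 1) :
    ∑ S ∈ 𝒢, β S * (((∑ i ∈ S, A i).card : ℝ) - 1)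
      ≤ ((∑ i : Fin M, A i).card : ℝ) - 1 := by
  set lo : Fin M → ℤ := fun i => (A i).min' (hne i) with hlo_def
  set hi : Fin M → ℤ := fun i => (A i).max' (hne i) with hhi_def
  have hlo : ∀ i, lo i ∈ A i := fun i => Finset.min'_mem _ _
  have hhi : ∀ i, hi i ∈ A i := fun i => Finset.max'_mem _ _
  have hmin : ∀ i, ∀ x ∈ A i, lo i ≤ x := fun i x hx => Finset.min'_le _ _ hx
  have hmax : ∀ i, ∀ x ∈ A i, x ≤ hi i := fun i x hx => Finset.le_max' _ _ hx
  have hlh : ∀ i, lo i ≤ hi i := fun i => hmin i _ (hhi i)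
  calc ∑ S ∈ 𝒢, β S * (((∑ i ∈ S, A i).card : ℝ) - 1)
      ≤ ∑ S ∈ 𝒢, ∑ j : Fin M, (if j ∈ S then β S else 0) *
          ((cnt A lo hi Finset.univ (j.val + 1) : ℝ) - cnt A lo hi Finset.univ j.val) := by
        refine Finset.sum_le_sum fun S hS => ?_
        rw [card_tele hlo hhi hmin hmax S, Finset.mul_sum]
        refine Finset.sum_le_sum fun j _ => ?_
        split_ifs with hj
        · exact mul_le_mul_of_nonneg_left (cnt_diff_le hlo hhi hlh S j hj) (hβ S hS)
        · have : cnt A lo hi S (j.val + 1) = cnt A lo hi S j.val := by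
            unfold cnt
            rw [thr_succ_of_notMem S j hj]
          rw [this]
          simp
    _ = ((∑ i : Fin M, A i).card : ℝ) - 1 := by
        rw [Finset.sum_comm, card_tele hlo hhi hmin hmax Finset.univ]
        refine Finset.sum_congr rfl fun j _ => ?_
        rw [← Finset.sum_mul, ← Finset.sum_filter, hfrac j, one_mul]
end

section
/- Let (𝒢, β) be a fractional partition of [M] and let A_1, …, A_M be nonempty finite subsets of ℤ. If there exists ρ ∈ ℕ such that for every S ∈ 𝒢 with β_S > 0 the sum set Σ_{i∈S} A_i is an arithmetic progression with common difference ρ (a set of the form {a, a+ρ, a+2ρ, …, a+(n−1)ρ}), then |A_1 + ⋯ + A_M| − 1 = Σ_{S∈𝒢} β_S · (|Σ_{i∈S} A_i| − 1). -/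
open Pointwise

/-- `B` is the full arithmetic progression from `l` to `u` with difference `r`. -/
structure FullAP (r : ℤ) (B : Finset ℤ) (l u : ℤ) : Prop where
  lo : l ∈ B
  hi : u ∈ B
  bd : ∀ z ∈ B, l ≤ z ∧ z ≤ u
  dv : ∀ z ∈ B, r ∣ z - l
  full : ∀ z, l ≤ z → z ≤ u → r ∣ z - l → z ∈ B

theorem FullAP.union {r : ℤ} (hr : 0 < r) {U V W : Finset ℤ} {lU uU lV uV lW uW : ℤ}
    (hlV : lV ∈ V) (huV : uV ∈ V) (hV : ∀ z ∈ V, lV ≤ z ∧ z ≤ uV)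
    (hlW : lW ∈ W) (huW : uW ∈ W) (hW : ∀ z ∈ W, lW ≤ z ∧ z ≤ uW)
    (hlU : lU ≤ uU)
    (h1 : FullAP r (U + V) (lU + lV) (uU + uV))
    (h2 : FullAP r (V + W) (lV + lW) (uV + uW)) :
    FullAP r (U + V + W) (lU + lV + lW) (uU + uV + uW) := by
  have hdW : ∀ w ∈ W, r ∣ w - lW := by
    intro w hw
    have := h2.dv _ (Finset.add_mem_add hlV hw)
    simpa using this
  refine ⟨Finset.add_mem_add h1.lo hlW, Finset.add_mem_add h1.hi huW, ?_, ?_, ?_⟩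
  · intro z hz
    obtain ⟨y, hy, w, hw, rfl⟩ := Finset.mem_add.1 hz
    have := h1.bd y hy
    have := hW w hw
    constructor <;> linarith
  · intro z hz
    obtain ⟨y, hy, w, hw, rfl⟩ := Finset.mem_add.1 hz
    have h := dvd_add (h1.dv y hy) (hdW w hw)
    refine h.trans (Eq.dvd ?_)
    ring
  · intro z hz1 hz2 hz3
    have hF : (W.filter (fun w => lU + lV + w ≤ z)).Nonempty :=
      ⟨lW, Finset.mem_filter.2 ⟨hlW, hz1⟩⟩
    obtain ⟨w0, hw0, hmax⟩ := Finset.exists_max_image _ (fun w => w) hF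
    obtain ⟨hw0W, hw0z⟩ := Finset.mem_filter.1 hw0
    have hdz : r ∣ (z - w0) - (lU + lV) := by
      have h := dvd_sub hz3 (hdW w0 hw0W)
      refine h.trans (Eq.dvd ?_)
      ring
    by_cases hc : z - w0 ≤ uU + uV
    · have hm := h1.full (z - w0) (by linarith) hc hdz
      have := Finset.add_mem_add hm hw0W
      simpa using this
    · exfalso
      push Not at hc
      have hlt : w0 < uW := by linarith
      have hd1 : r ∣ uW - w0 := by
        have h := dvd_sub (hdW uW huW) (hdW w0 hw0W)
        refine h.trans (Eq.dvd ?_)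
        ring
      have hle1 := Int.le_of_dvd (by linarith) hd1
      have hdV : r ∣ (uV - lV) := by
        have h := h2.dv _ (Finset.add_mem_add huV hlW)
        simpa using h
      have hd2 : r ∣ (w0 + uV + r) - (lV + lW) := by
        have h := dvd_add (dvd_add hdV (hdW w0 hw0W)) (dvd_refl r)
        refine h.trans (Eq.dvd ?_)
        ring
      have hy := h2.full (w0 + uV + r)
        (by linarith [(hV lV hlV).2, (hW w0 hw0W).1]) (by linarith) hd2
      obtain ⟨v, hv, w', hw', he⟩ := Finset.mem_add.1 hy
      have hv' := hV v hv
      have hd3 : r ∣ (z - w0) - (uU + uV) := by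
        have h := dvd_sub hdz (h1.dv _ h1.hi)
        refine h.trans (Eq.dvd ?_)
        ring
      have hle2 := Int.le_of_dvd (by linarith) hd3
      have hw'F : w' ∈ W.filter (fun w => lU + lV + w ≤ z) :=
        Finset.mem_filter.2 ⟨hw', by linarith⟩
      have : w' ≤ w0 := hmax w' hw'F
      linarith

theorem FullAP.card {r : ℤ} (hr : 0 < r) {B : Finset ℤ} {l u : ℤ} (h : FullAP r B l u) :
    ((B.card : ℝ) - 1) = ((u - l : ℤ) : ℝ) / (r : ℝ) := by
  obtain ⟨k, hk⟩ := h.dv u h.hi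
  have hlu := (h.bd u h.hi).1
  have hk0 : 0 ≤ k := by
    by_contra hneg
    push Not at hneg
    nlinarith
  obtain ⟨k, rfl⟩ := Int.eq_ofNat_of_zero_le hk0
  have hB : B = (Finset.range (k + 1)).image (fun t : ℕ => l + r * (t : ℤ)) := by
    ext z
    simp only [Finset.mem_image, Finset.mem_range]
    constructor
    · intro hz
      obtain ⟨c, hc⟩ := h.dv z hz
      have hb := h.bd z hz
      have hc0 : 0 ≤ c := by
        by_contra hneg
        push Not at hneg
        nlinarith
      obtain ⟨c, rfl⟩ := Int.eq_ofNat_of_zero_le hc0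
      refine ⟨c, ?_, by linarith⟩
      have : (c : ℤ) ≤ k := by
        by_contra hneg
        push Not at hneg
        nlinarith
      omega
    · rintro ⟨t, ht, rfl⟩
      have ht' : (t : ℤ) ≤ k := by omega
      apply h.full
      · have : 0 ≤ r * (t : ℤ) := by positivity
        linarith
      · nlinarith
      · simp
  have hinj : Function.Injective (fun t : ℕ => l + r * (t : ℤ)) := by
    intro a b hab
    have : r * (a : ℤ) = r * (b : ℤ) := by simpa using hab
    exact_mod_cast mul_left_cancel₀ hr.ne' this
  rw [hB, Finset.card_image_of_injective _ hinj, Finset.card_range, hk]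
  have : (r : ℝ) ≠ 0 := by exact_mod_cast hr.ne'
  push_cast
  field_simp
  ring

theorem FullAP.of_image {r : ℤ} (hr : 0 < r) {B : Finset ℤ} {l u x : ℤ} {n : ℕ}
    (hl : l ∈ B) (hu : u ∈ B) (hb : ∀ z ∈ B, l ≤ z ∧ z ≤ u)
    (hB : B = (Finset.range n).image (fun t : ℕ => x + (t : ℤ) * r)) : FullAP r B l u := by
  have hmem : ∀ z, z ∈ B ↔ ∃ t < n, x + (t : ℤ) * r = z := by
    intro z
    rw [hB]
    simp
  obtain ⟨a, ha, hla⟩ := (hmem l).1 hl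
  obtain ⟨b, hbn, hub⟩ := (hmem u).1 hu
  refine ⟨hl, hu, hb, ?_, ?_⟩
  · intro z hz
    obtain ⟨t, ht, rfl⟩ := (hmem z).1 hz
    exact ⟨t - a, by rw [← hla]; ring⟩
  · rintro z h1 h2 ⟨c, hc⟩
    have hc0 : 0 ≤ c := by
      by_contra hneg
      push Not at hneg
      nlinarith
    obtain ⟨c, rfl⟩ := Int.eq_ofNat_of_zero_le hc0
    refine (hmem z).2 ⟨a + c, ?_, ?_⟩
    · have : (a : ℤ) + c ≤ b := by
        by_contra hneg
        push Not at hneg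
        nlinarith
      omega
    · push_cast
      linarith

theorem sum_bounds_s4 {ι : Type*} [DecidableEq ι] (A : ι → Finset ℤ) (l u : ι → ℤ)
    (hl : ∀ i, l i ∈ A i) (hu : ∀ i, u i ∈ A i) (hb : ∀ i, ∀ z ∈ A i, l i ≤ z ∧ z ≤ u i)
    (S : Finset ι) :
    ∑ i ∈ S, l i ∈ ∑ i ∈ S, A i ∧ ∑ i ∈ S, u i ∈ ∑ i ∈ S, A i ∧
      ∀ z ∈ ∑ i ∈ S, A i, ∑ i ∈ S, l i ≤ z ∧ z ≤ ∑ i ∈ S, u i := by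
  induction S using Finset.induction_on with
  | empty => simp
  | insert a S ha ih =>
    obtain ⟨h1, h2, h3⟩ := ih
    simp only [Finset.sum_insert ha]
    refine ⟨Finset.add_mem_add (hl a) h1, Finset.add_mem_add (hu a) h2, ?_⟩
    intro z hz
    obtain ⟨y, hy, w, hw, rfl⟩ := Finset.mem_add.1 hz
    have := hb a y hy
    have := h3 w hw
    constructor <;> linarith

/-- Equality case of Theorem `th:Z`: if there is `ρ ∈ ℕ` such that every set of the
fractional partition with positive weight has a Minkowski subset sum which is an
arithmetic progression of increment `ρ`, then equality holds. -/
theorem card_sub_one_fractional_superadditivity_eq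
    (M : ℕ) (hM : 1 ≤ M)
    (A : Fin M → Finset ℤ)
    (hne : ∀ i, (A i).Nonempty)
    (𝒢 : Finset (Finset (Fin M)))
    (β : Finset (Fin M) → ℝ)
    (h𝒢 : ∀ S ∈ 𝒢, S.Nonempty)
    (hβ : ∀ S ∈ 𝒢, 0 ≤ β S)
    (hfrac : ∀ i : Fin M, ∑ S ∈ 𝒢.filter (fun S => i ∈ S), β S = 1)
    (ρ : ℕ)
    (hAP : ∀ S ∈ 𝒢, 0 < β S → ∃ (x : ℤ) (n : ℕ),
      (∑ i ∈ S, A i) = (Finset.range n).image (fun t : ℕ => x + (t : ℤ) * (ρ : ℤ))) :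
    ((∑ i : Fin M, A i).card : ℝ) - 1
      = ∑ S ∈ 𝒢, β S * (((∑ i ∈ S, A i).card : ℝ) - 1) := by
  classical
  wlog hρ : 0 < ρ generalizing ρ
  · refine this 1 ?_ one_pos
    intro S hS hpos
    obtain ⟨x, n, h⟩ := hAP S hS hpos
    have h0 : ρ = 0 := by omega
    have hn : (∑ i ∈ S, A i).Nonempty := by
      exact ⟨_, (sum_bounds_s4 A (fun i => (A i).min' (hne i)) (fun i => (A i).max' (hne i))
        (fun i => Finset.min'_mem _ _) (fun i => Finset.max'_mem _ _)
        (fun i z hz => ⟨Finset.min'_le _ _ hz, Finset.le_max' _ _ hz⟩) S).1⟩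
    refine ⟨x, 1, ?_⟩
    rw [h] at hn ⊢
    subst h0
    have hn' : (Finset.range n).Nonempty := by simpa using hn
    ext z
    obtain ⟨t, ht⟩ := hn'
    simp only [Finset.mem_image, Finset.mem_range] at ht ⊢
    constructor
    · rintro ⟨s, hs, rfl⟩
      exact ⟨0, by norm_num, by simp⟩
    · rintro ⟨s, hs, rfl⟩
      have : s = 0 := by omega
      exact ⟨t, ht, by simp [this]⟩
  have hr : (0 : ℤ) < (ρ : ℤ) := by exact_mod_cast hρ
  let l : Fin M → ℤ := fun i => (A i).min' (hne i)
  let u : Fin M → ℤ := fun i => (A i).max' (hne i)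
  have hl : ∀ i, l i ∈ A i := fun i => Finset.min'_mem _ _
  have hu : ∀ i, u i ∈ A i := fun i => Finset.max'_mem _ _
  have hb : ∀ i, ∀ z ∈ A i, l i ≤ z ∧ z ≤ u i := fun i z hz =>
    ⟨Finset.min'_le _ _ hz, Finset.le_max' _ _ hz⟩
  have hsb := sum_bounds_s4 A l u hl hu hb
  have hfull : ∀ S ∈ 𝒢, 0 < β S →
      FullAP ρ (∑ i ∈ S, A i) (∑ i ∈ S, l i) (∑ i ∈ S, u i) := by
    intro S hS hpos
    obtain ⟨x, n, h⟩ := hAP S hS hpos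
    obtain ⟨h1, h2, h3⟩ := hsb S
    exact FullAP.of_image hr h1 h2 h3 h
  have hunion : ∀ S T : Finset (Fin M),
      FullAP ρ (∑ i ∈ S, A i) (∑ i ∈ S, l i) (∑ i ∈ S, u i) →
      FullAP ρ (∑ i ∈ T, A i) (∑ i ∈ T, l i) (∑ i ∈ T, u i) →
      FullAP ρ (∑ i ∈ S ∪ T, A i) (∑ i ∈ S ∪ T, l i) (∑ i ∈ S ∪ T, u i) := by
    intro S T hS hT
    have e1 : ∀ {N : Type} [AddCommMonoid N] (f : Fin M → N),
        ∑ i ∈ S, f i = ∑ i ∈ S \ T, f i + ∑ i ∈ S ∩ T, f i := by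
      intro N _ f
      rw [add_comm, Finset.sum_inter_add_sum_sdiff]
    have e2 : ∀ {N : Type} [AddCommMonoid N] (f : Fin M → N),
        ∑ i ∈ T, f i = ∑ i ∈ S ∩ T, f i + ∑ i ∈ T \ S, f i := by
      intro N _ f
      rw [Finset.inter_comm, Finset.sum_inter_add_sum_sdiff]
    have e3 : ∀ {N : Type} [AddCommMonoid N] (f : Fin M → N),
        ∑ i ∈ S ∪ T, f i = ∑ i ∈ S \ T, f i + ∑ i ∈ S ∩ T, f i + ∑ i ∈ T \ S, f i := by
      intro N _ f
      rw [← e1, ← Finset.sum_union Finset.disjoint_sdiff, Finset.union_sdiff_self_eq_union]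
    rw [e1, e1 l, e1 u] at hS
    rw [e2, e2 l, e2 u] at hT
    rw [e3, e3 l, e3 u]
    obtain ⟨a1, a2, a3⟩ := hsb (S ∩ T)
    obtain ⟨b1, b2, b3⟩ := hsb (T \ S)
    obtain ⟨c1, c2, c3⟩ := hsb (S \ T)
    exact FullAP.union hr a1 a2 a3 b1 b2 b3 (c3 _ c1).2 hS hT
  have hsup : ∀ H : Finset (Finset (Fin M)), (∀ S ∈ H, S ∈ 𝒢 ∧ 0 < β S) →
      FullAP ρ (∑ i ∈ H.sup id, A i) (∑ i ∈ H.sup id, l i) (∑ i ∈ H.sup id, u i) := by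
    intro H
    induction H using Finset.induction_on with
    | empty =>
      intro _
      refine ⟨by simp, by simp, by simp, by simp, ?_⟩
      intro z h1 h2 _
      simp at h1 h2 ⊢
      omega
    | insert S H hSH ih =>
      intro hH
      rw [Finset.sup_insert]
      have hS := hH S (Finset.mem_insert_self _ _)
      exact hunion _ _ (hfull S hS.1 hS.2)
        (ih fun T hT => hH T (Finset.mem_insert_of_mem hT))
  have huniv : (𝒢.filter (fun S => 0 < β S)).sup id = Finset.univ := by
    ext i
    simp only [Finset.mem_univ, iff_true, Finset.mem_sup, Finset.mem_filter, id]
    by_contra hcon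
    push Not at hcon
    have : ∑ S ∈ 𝒢.filter (fun S => i ∈ S), β S ≤ 0 := by
      apply Finset.sum_nonpos
      intro S hS
      obtain ⟨hS1, hS2⟩ := Finset.mem_filter.1 hS
      by_contra hneg
      push Not at hneg
      exact hcon S ⟨hS1, hneg⟩ hS2
    rw [hfrac i] at this
    linarith
  have hall := hsup (𝒢.filter (fun S => 0 < β S)) (fun S hS => Finset.mem_filter.1 hS)
  rw [huniv] at hall
  rw [hall.card hr]
  have hterm : ∀ S ∈ 𝒢, β S * (((∑ i ∈ S, A i).card : ℝ) - 1)
      = ∑ i : Fin M, if i ∈ S then β S * (((u i - l i : ℤ) : ℝ) / ((ρ : ℤ) : ℝ)) else 0 := by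
    intro S hS
    rw [← Finset.sum_filter, Finset.filter_univ_mem, ← Finset.mul_sum]
    rcases (hβ S hS).eq_or_lt with h0 | hpos
    · rw [← h0]; simp
    · rw [(hfull S hS hpos).card hr, ← Finset.sum_div, ← Finset.sum_sub_distrib, Int.cast_sum]
  rw [Finset.sum_congr rfl hterm, Finset.sum_comm, ← Finset.sum_sub_distrib, Int.cast_sum,
    Finset.sum_div]
  refine Finset.sum_congr rfl fun i _ => ?_
  rw [← Finset.sum_filter, ← Finset.sum_mul, hfrac i, one_mul]
end

section
/- Let d_1, d_2 be positive integers and p, q > 0. For i ∈ [M], let A_i ⊆ ℝ^{d_1} and B_i ⊆ ℝ^{d_2} be nonempty compact sets, and let β_S ≥ 0 (S ⊆ [M]) be nonnegative numbers. Assume |Σ_{i∈[M]} A_i|^{1/p} ≥ Σ_S β_S |Σ_{i∈S} A_i|^{1/p} and |Σ_{i∈[M]} B_i|^{1/q} ≥ Σ_S β_S |Σ_{i∈S} B_i|^{1/q}, where the volumes are d_1- and d_2-dimensional Lebesgue measure respectively. Then the Cartesian product sets A_i × B_i ⊆ ℝ^{d_1+d_2} satisfy |Σ_{i∈[M]} (A_i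 × B_i)|^{1/(p+q)} ≥ Σ_S β_S |Σ_{i∈S} (A_i × B_i)|^{1/(p+q)}, with (d_1+d_2)-dimensional Lebesgue measure. -/
open Pointwise MeasureTheory

lemma fsc_sum_prod {ι α γ : Type*} [AddCommMonoid α] [AddCommMonoid γ]
    (A : ι → Set α) (B : ι → Set γ) (S : Finset ι) :
    ∑ i ∈ S, (A i ×ˢ B i) = (∑ i ∈ S, A i) ×ˢ (∑ i ∈ S, B i) := by
  classical
  induction S using Finset.induction_on with
  | empty =>
    ext ⟨x, y⟩
    simp [Prod.ext_iff]
  | insert a s ha ih =>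
    rw [Finset.sum_insert ha, Finset.sum_insert ha, Finset.sum_insert ha, ih]
    ext ⟨x, y⟩
    simp only [Set.mem_add, Set.mem_prod, Prod.exists, Prod.mk_add_mk, Prod.mk.injEq]
    constructor
    · rintro ⟨a, b, ⟨h1, h2⟩, c, d, ⟨h3, h4⟩, h5, h6⟩
      exact ⟨⟨a, h1, c, h3, h5⟩, ⟨b, h2, d, h4, h6⟩⟩
    · rintro ⟨⟨a, h1, c, h3, h5⟩, ⟨b, h2, d, h4, h6⟩⟩
      exact ⟨a, b, ⟨h1, h2⟩, c, d, ⟨h3, h4⟩, h5, h6⟩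

lemma fsc_holder {ι : Type*} (s : Finset ι) (p q : ℝ) (hp : 0 < p) (hq : 0 < q)
    (β a b : ι → ℝ) (hβ : ∀ i, 0 ≤ β i) (ha : ∀ i, 0 ≤ a i) (hb : ∀ i, 0 ≤ b i)
    (X Y : ℝ) (hX : 0 ≤ X) (hY : 0 ≤ Y)
    (hA : ∑ i ∈ s, β i * a i ^ (1 / p) ≤ X ^ (1 / p))
    (hB : ∑ i ∈ s, β i * b i ^ (1 / q) ≤ Y ^ (1 / q)) :
    ∑ i ∈ s, β i * (a i * b i) ^ (1 / (p + q)) ≤ (X * Y) ^ (1 / (p + q)) := by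
  have hpq : 0 < p + q := by positivity
  have hc : ((p + q) / p).HolderConjugate ((p + q) / q) := by
    rw [Real.holderConjugate_iff]
    constructor
    · rw [lt_div_iff₀ hp]; linarith
    · field_simp
  have key := Real.inner_le_Lp_mul_Lq_of_nonneg s hc
    (f := fun i => (β i * a i ^ (1 / p)) ^ (p / (p + q)))
    (g := fun i => (β i * b i ^ (1 / q)) ^ (q / (p + q)))
    (fun i _ => Real.rpow_nonneg (mul_nonneg (hβ i) (Real.rpow_nonneg (ha i) _)) _)
    (fun i _ => Real.rpow_nonneg (mul_nonneg (hβ i) (Real.rpow_nonneg (hb i) _)) _)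
  have e1 : ∀ i, ((β i * a i ^ (1 / p)) ^ (p / (p + q))) ^ ((p + q) / p) = β i * a i ^ (1 / p) := by
    intro i
    rw [← Real.rpow_mul (mul_nonneg (hβ i) (Real.rpow_nonneg (ha i) _))]
    rw [show p / (p + q) * ((p + q) / p) = 1 by field_simp, Real.rpow_one]
  have e2 : ∀ i, ((β i * b i ^ (1 / q)) ^ (q / (p + q))) ^ ((p + q) / q) = β i * b i ^ (1 / q) := by
    intro i
    rw [← Real.rpow_mul (mul_nonneg (hβ i) (Real.rpow_nonneg (hb i) _))]
    rw [show q / (p + q) * ((p + q) / q) = 1 by field_simp, Real.rpow_one]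
  have e3 : ∀ i, (β i * a i ^ (1 / p)) ^ (p / (p + q)) * (β i * b i ^ (1 / q)) ^ (q / (p + q))
      = β i * (a i * b i) ^ (1 / (p + q)) := by
    intro i
    rw [Real.mul_rpow (hβ i) (Real.rpow_nonneg (ha i) _),
      Real.mul_rpow (hβ i) (Real.rpow_nonneg (hb i) _), ← Real.rpow_mul (ha i),
      ← Real.rpow_mul (hb i), Real.mul_rpow (ha i) (hb i),
      show 1 / p * (p / (p + q)) = 1 / (p + q) by field_simp,
      show 1 / q * (q / (p + q)) = 1 / (p + q) by field_simp]
    have : β i ^ (p / (p + q)) * β i ^ (q / (p + q)) = β i := by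
      rw [← Real.rpow_add_of_nonneg (hβ i) (by positivity) (by positivity),
        show p / (p + q) + q / (p + q) = 1 by field_simp, Real.rpow_one]
    nth_rewrite 3 [← this]
    ring
  simp only [e1, e2, e3] at key
  refine key.trans ?_
  have n1 : 0 ≤ ∑ i ∈ s, β i * a i ^ (1 / p) :=
    Finset.sum_nonneg fun i _ => mul_nonneg (hβ i) (Real.rpow_nonneg (ha i) _)
  have n2 : 0 ≤ ∑ i ∈ s, β i * b i ^ (1 / q) :=
    Finset.sum_nonneg fun i _ => mul_nonneg (hβ i) (Real.rpow_nonneg (hb i) _)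
  calc _ ≤ (X ^ (1 / p)) ^ (1 / ((p + q) / p)) * (Y ^ (1 / q)) ^ (1 / ((p + q) / q)) := by
        gcongr
    _ = _ := by
        rw [← Real.rpow_mul hX, ← Real.rpow_mul hY, Real.mul_rpow hX hY,
          show 1 / p * (1 / ((p + q) / p)) = 1 / (p + q) by field_simp,
          show 1 / q * (1 / ((p + q) / q)) = 1 / (p + q) by field_simp]

/-- Lemma `lem:cartes`: combining fractional superadditivity statements for volumes
through Cartesian products. -/
theorem fractional_superadditivity_cartesian_product
    (M d₁ d₂ : ℕ) (hM : 1 ≤ M) (hd₁ : 0 < d₁) (hd₂ : 0 < d₂)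
    (p q : ℝ) (hp : 0 < p) (hq : 0 < q)
    (A : Fin M → Set (Fin d₁ → ℝ)) (B : Fin M → Set (Fin d₂ → ℝ))
    (hAne : ∀ i, (A i).Nonempty) (hAcpt : ∀ i, IsCompact (A i))
    (hBne : ∀ i, (B i).Nonempty) (hBcpt : ∀ i, IsCompact (B i))
    (β : Finset (Fin M) → ℝ)
    (hβ : ∀ S : Finset (Fin M), 0 ≤ β S)
    (hA : ∑ S : Finset (Fin M), β S * (volume (∑ i ∈ S, A i)).toReal ^ (1 / p)
      ≤ (volume (∑ i : Fin M, A i)).toReal ^ (1 / p))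
    (hB : ∑ S : Finset (Fin M), β S * (volume (∑ i ∈ S, B i)).toReal ^ (1 / q)
      ≤ (volume (∑ i : Fin M, B i)).toReal ^ (1 / q)) :
    ∑ S : Finset (Fin M), β S * (volume (∑ i ∈ S, (A i ×ˢ B i))).toReal ^ (1 / (p + q))
      ≤ (volume (∑ i : Fin M, (A i ×ˢ B i))).toReal ^ (1 / (p + q)) := by
  have hv : ∀ S : Finset (Fin M), (volume (∑ i ∈ S, (A i ×ˢ B i))).toReal
      = (volume (∑ i ∈ S, A i)).toReal * (volume (∑ i ∈ S, B i)).toReal := by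
    intro S
    rw [fsc_sum_prod, Measure.volume_eq_prod, Measure.prod_prod, ENNReal.toReal_mul]
  simp only [hv]
  exact fsc_holder Finset.univ p q hp hq β _ _ hβ (fun _ => ENNReal.toReal_nonneg)
    (fun _ => ENNReal.toReal_nonneg) _ _ ENNReal.toReal_nonneg ENNReal.toReal_nonneg hA hB
end

section
/- Let S_1, …, S_s be subsets of [M] such that every i ∈ [M] belongs to exactly q of them, and for i ∈ [M] let h_1(i) < h_2(i) < ⋯ < h_q(i) be the increasing enumeration of the indices j with i ∈ S_j. Let A_1, …, A_M be nonempty compact subsets of ℝ with min A_i = 0 and a_i := max A_i. Fix k ∈ {1,…,q} and for j ∈ {1,…,s} set T_j := (Σ_{i∈S_j} A_i + Σ_{i ∈ h_k^{-1}({1,…,j−1}) \ S_j} a_i) ∩ ( Σ_{i∈h_k^{-1}({1,…,j−1})} a_i , Σ_{i∈h_k^{-1}({1,…,j})} a_i ]. Then the sets T_1, …, T_s are pairwise disjoint, each T_j is contained in Σ_{i∈[M]} A_i, and consequently Σ_{j=1}^s |T_j| ≤ |Σ_{i∈[M]} A_i|. -/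
open Pointwise MeasureTheory

theorem isCompact_finset_sum_aux {M : ℕ} (A : Fin M → Set ℝ) (hcpt : ∀ i, IsCompact (A i))
    (t : Finset (Fin M)) : IsCompact (∑ i ∈ t, A i) := by
  classical
  induction t using Finset.induction_on with
  | empty => simpa using (isCompact_singleton : IsCompact ({0} : Set ℝ))
  | insert i t hi ih =>
    rw [Finset.sum_insert hi]
    exact (hcpt i).add ih

/-- Lemma `lem:decomp`: the truncated translated subset sums `T j` are pairwise
disjoint subsets of the full Minkowski sum, so their total length is at most the
length of the full sum. -/
theorem decomposition_lemma
    (M s q : ℕ) (hq : 0 < q)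
    (S : Fin s → Finset (Fin M))
    (hcover : ∀ i : Fin M, (Finset.univ.filter (fun j => i ∈ S j)).card = q)
    (h : Fin M → Fin q → Fin s)
    (hmono : ∀ i, StrictMono (h i))
    (hmem : ∀ (i : Fin M) (j : Fin s), i ∈ S j ↔ ∃ k, h i k = j)
    (A : Fin M → Set ℝ)
    (hne : ∀ i, (A i).Nonempty)
    (hcpt : ∀ i, IsCompact (A i))
    (a : Fin M → ℝ)
    (hmin : ∀ i, IsLeast (A i) 0)
    (hmax : ∀ i, IsGreatest (A i) (a i))
    (k : Fin q)
    (T : Fin s → Set ℝ)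
    (hT : ∀ j : Fin s, T j =
      ((∑ i ∈ S j, A i) +
          ({∑ i ∈ (Finset.univ.filter (fun i => h i k < j)) \ S j, a i} : Set ℝ)) ∩
        Set.Ioc (∑ i ∈ Finset.univ.filter (fun i => h i k < j), a i)
          (∑ i ∈ Finset.univ.filter (fun i => h i k ≤ j), a i)) :
    (∀ j₁ j₂ : Fin s, j₁ ≠ j₂ → Disjoint (T j₁) (T j₂)) ∧
    (∀ j : Fin s, T j ⊆ ∑ i : Fin M, A i) ∧
    ∑ j : Fin s, (volume (T j)).toReal ≤ (volume (∑ i : Fin M, A i)).toReal := by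
  have ha0 : ∀ i, 0 ≤ a i := fun i => (hmin i).2 (hmax i).1
  have key : ∀ j₁ j₂ : Fin s, j₁ < j₂ → Disjoint (T j₁) (T j₂) := by
    intro j₁ j₂ hlt
    rw [Set.disjoint_left]
    intro x hx1 hx2
    rw [hT] at hx1 hx2
    have h1 := hx1.2.2
    have h2 := hx2.2.1
    have h3 : ∑ i ∈ Finset.univ.filter (fun i => h i k ≤ j₁), a i
        ≤ ∑ i ∈ Finset.univ.filter (fun i => h i k < j₂), a i := by
      apply Finset.sum_le_sum_of_subset_of_nonneg
      · intro i hi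
        simp only [Finset.mem_filter, Finset.mem_univ, true_and] at hi ⊢
        exact lt_of_le_of_lt hi hlt
      · intro i _ _
        exact ha0 i
    linarith
  have hdisj : ∀ j₁ j₂ : Fin s, j₁ ≠ j₂ → Disjoint (T j₁) (T j₂) := by
    intro j₁ j₂ hne'
    rcases lt_or_gt_of_ne hne' with hl | hl
    · exact key _ _ hl
    · exact (key _ _ hl).symm
  have hsub : ∀ j : Fin s, T j ⊆ ∑ i : Fin M, A i := by
    intro j x hx
    rw [hT] at hx
    obtain ⟨y, hy, z, hz, rfl⟩ := hx.1
    rw [Set.mem_singleton_iff] at hz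
    subst hz
    obtain ⟨f, hf, rfl⟩ := (Set.mem_finset_sum _ _ _).1 hy
    refine (Set.mem_finset_sum _ _ _).2
      ⟨fun i => if i ∈ S j then f i else if h i k < j then a i else 0, ?_, ?_⟩
    · intro i _
      dsimp only
      split_ifs with h1 h2
      · exact hf h1
      · exact (hmax i).1
      · exact (hmin i).1
    · have e1 : ∑ i ∈ S j, f i = ∑ i : Fin M, if i ∈ S j then f i else 0 := by
        simp
      have e2 : ∑ i ∈ (Finset.univ.filter (fun i => h i k < j)) \ S j, a i
          = ∑ i : Fin M, if i ∈ (Finset.univ.filter (fun i => h i k < j)) \ S j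
            then a i else 0 := by
        rw [Finset.sum_ite_mem, Finset.univ_inter]
      dsimp only
      rw [e1, e2, ← Finset.sum_add_distrib]
      apply Finset.sum_congr rfl
      intro i _
      by_cases h1 : i ∈ S j <;> by_cases h2 : h i k < j <;> simp [h1, h2]
  refine ⟨hdisj, hsub, ?_⟩
  have hfin : volume (∑ i : Fin M, A i) ≠ ⊤ :=
    (isCompact_finset_sum_aux A hcpt Finset.univ).measure_lt_top.ne
  have hmeas : ∀ j, MeasurableSet (T j) := by
    intro j
    rw [hT]
    exact ((isCompact_finset_sum_aux A hcpt (S j)).add isCompact_singleton).measurableSet.inter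
      measurableSet_Ioc
  rw [← ENNReal.toReal_sum
    (fun j _ => ((measure_mono (hsub j)).trans_lt hfin.lt_top).ne)]
  apply ENNReal.toReal_mono hfin
  rw [← measure_biUnion_finset (fun i _ j _ hij => hdisj i j hij) (fun j _ => hmeas j)]
  exact measure_mono (Set.iUnion₂_subset fun j _ => hsub j)
end

section
/- Let f : 2^{[M]} → ℝ_+ be a set function. If f is fractionally superadditive — that is, whenever T ⊆ [M] and nonnegative numbers (β_S)_{S⊆[M]} satisfy 𝟙_T = Σ_{S⊆[M]} β_S 𝟙_S as vectors in ℝ^M, one has f(T) ≥ Σ_{S⊆[M]} β_S f(S) — then f admits a positively 1-homogeneous concave extension to ℝ_+^M: there exists F : [0,∞)^M → ℝ with F concave on [0,∞)^M, F(λx) = λF(x) for all λ ≥ 0 and x ∈ [0,∞)^M, and F(𝟙_S) = f(S) for every S ⊆ [M]. -/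
/-- Proposition `prop:extend`, direction `1 ⟹ 2`: a nonnegative fractionally
superadditive set function on `2^[M]` admits a positively 1-homogeneous concave
extension to the nonnegative orthant `ℝ₊^M`. -/
theorem concave_extension_of_fractionally_superadditive
    (M : ℕ) (hM : 1 ≤ M)
    (f : Finset (Fin M) → ℝ)
    (hf : ∀ S, 0 ≤ f S)
    (hFSA : ∀ (T : Finset (Fin M)) (β : Finset (Fin M) → ℝ),
      (∀ S, 0 ≤ β S) →
      (∀ i : Fin M, (if i ∈ T then (1 : ℝ) else 0)
        = ∑ S : Finset (Fin M), β S * (if i ∈ S then 1 else 0)) →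
      ∑ S : Finset (Fin M), β S * f S ≤ f T) :
    ∃ F : (Fin M → ℝ) → ℝ,
      ConcaveOn ℝ {x : Fin M → ℝ | ∀ i, 0 ≤ x i} F ∧
      (∀ (l : ℝ), 0 ≤ l → ∀ x : Fin M → ℝ, (∀ i, 0 ≤ x i) →
        F (l • x) = l * F x) ∧
      (∀ S : Finset (Fin M), F (fun i => if i ∈ S then 1 else 0) = f S) := by
  classical
  let R : (Fin M → ℝ) → Set ℝ := fun x => {v | ∃ β : Finset (Fin M) → ℝ, (∀ S, 0 ≤ β S) ∧
    (∀ i, x i = ∑ S : Finset (Fin M), β S * (if i ∈ S then 1 else 0)) ∧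
    v = ∑ S : Finset (Fin M), β S * f S}
  have f0 : f ∅ = 0 := by
    have h := hFSA ∅ (fun S => if S = ∅ then 2 else 0) (fun S => by split_ifs <;> norm_num)
      (fun i => by simp only [ite_mul, zero_mul, Finset.sum_ite_eq', Finset.mem_univ, if_true]; simp)
    simp at h
    linarith [hf ∅]
  have hadd : ∀ x y v w, v ∈ R x → w ∈ R y → v + w ∈ R (x + y) := by
    rintro x y v w ⟨β, hβ, hx, rfl⟩ ⟨γ, hγ, hy, rfl⟩
    refine ⟨fun S => β S + γ S, fun S => add_nonneg (hβ S) (hγ S), fun i => ?_, ?_⟩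
    · rw [Pi.add_apply, hx, hy, ← Finset.sum_add_distrib]
      exact Finset.sum_congr rfl fun S _ => by ring
    · rw [← Finset.sum_add_distrib]
      exact Finset.sum_congr rfl fun S _ => by ring
  have hsmul : ∀ (l : ℝ) x v, 0 ≤ l → v ∈ R x → l * v ∈ R (l • x) := by
    rintro l x v hl ⟨β, hβ, hx, rfl⟩
    refine ⟨fun S => l * β S, fun S => mul_nonneg hl (hβ S), fun i => ?_, ?_⟩
    · rw [Pi.smul_apply, hx, smul_eq_mul, Finset.mul_sum]
      exact Finset.sum_congr rfl fun S _ => by ring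
    · rw [Finset.mul_sum]
      exact Finset.sum_congr rfl fun S _ => by ring
  have hne : ∀ x : Fin M → ℝ, (∀ i, 0 ≤ x i) → (R x).Nonempty := by
    intro x hx
    refine ⟨_, fun S => ∑ j, if S = {j} then x j else 0, fun S => ?_, fun i => ?_, rfl⟩
    · exact Finset.sum_nonneg fun j _ => by split_ifs <;> simp [hx]
    · simp_rw [Finset.sum_mul]
      rw [Finset.sum_comm]
      simp only [ite_mul, zero_mul, Finset.sum_ite_eq', Finset.mem_univ, if_true]
      simp
  have hbdd : ∀ x : Fin M → ℝ, (∀ i, 0 ≤ x i) → BddAbove (R x) := by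
    intro x hx0
    refine ⟨∑ S : Finset (Fin M), (∑ i, x i) * f S, ?_⟩
    rintro v ⟨β, hβ, hx, rfl⟩
    refine Finset.sum_le_sum fun S _ => ?_
    rcases S.eq_empty_or_nonempty with rfl | ⟨i, hi⟩
    · simp [f0]
    · refine mul_le_mul_of_nonneg_right ?_ (hf S)
      have h1 : x i ≤ ∑ i, x i := Finset.single_le_sum (fun j _ => hx0 j) (Finset.mem_univ i)
      have h2 : β S * (if i ∈ S then 1 else 0) ≤
          ∑ S : Finset (Fin M), β S * (if i ∈ S then 1 else 0) :=
        Finset.single_le_sum (f := fun S : Finset (Fin M) => β S * (if i ∈ S then 1 else 0))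
          (fun T _ => mul_nonneg (hβ T) (by split_ifs <;> norm_num)) (Finset.mem_univ S)
      rw [← hx i] at h2
      simp [hi] at h2
      linarith
  have hind : ∀ S : Finset (Fin M), sSup (R (fun i => if i ∈ S then 1 else 0)) = f S := by
    intro T
    have hg : IsGreatest (R (fun i => if i ∈ T then 1 else 0)) (f T) := by
      constructor
      · exact ⟨fun S => if S = T then 1 else 0, fun S => by dsimp only; split_ifs <;> norm_num,
          fun i => by simp only [ite_mul, zero_mul, Finset.sum_ite_eq', Finset.mem_univ, if_true]; simp, by simp⟩
      · rintro v ⟨β, hβ, hx, rfl⟩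
        exact hFSA T β hβ hx
    exact hg.csSup_eq
  have hsm0 : ∀ (l : ℝ), 0 ≤ l → ∀ x : Fin M → ℝ, (∀ i, 0 ≤ x i) → ∀ i, 0 ≤ (l • x) i :=
    fun l hl x hx i => mul_nonneg hl (hx i)
  have hle : ∀ (l : ℝ), 0 < l → ∀ x : Fin M → ℝ, (∀ i, 0 ≤ x i) →
      l * sSup (R x) ≤ sSup (R (l • x)) := by
    intro l hl x hx
    rw [← le_div_iff₀' hl]
    refine csSup_le (hne x hx) fun v hv => ?_
    rw [le_div_iff₀' hl]
    exact le_csSup (hbdd _ (hsm0 l hl.le x hx)) (hsmul l x v hl.le hv)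
  have hhom : ∀ (l : ℝ), 0 ≤ l → ∀ x : Fin M → ℝ, (∀ i, 0 ≤ x i) →
      sSup (R (l • x)) = l * sSup (R x) := by
    intro l hl x hx
    rcases hl.eq_or_lt with rfl | hl
    · have h := hind ∅
      rw [f0] at h
      rw [zero_smul, zero_mul, ← h]
      congr 2
    · refine le_antisymm ?_ (hle l hl x hx)
      have h := hle l⁻¹ (inv_pos.2 hl) (l • x) (hsm0 l hl.le x hx)
      rwa [inv_smul_smul₀ hl.ne', inv_mul_le_iff₀ hl] at h
  refine ⟨fun x => sSup (R x), ⟨?_, ?_⟩, hhom, hind⟩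
  · intro x hx y hy a b ha hb _ i
    exact add_nonneg (hsm0 a ha x hx i) (hsm0 b hb y hy i)
  · intro x hx y hy a b ha hb _
    have hx' := hsm0 a ha x hx
    have hy' := hsm0 b hb y hy
    simp only [smul_eq_mul]
    rw [← hhom a ha x hx, ← hhom b hb y hy, ← le_sub_iff_add_le]
    refine csSup_le (hne _ hx') fun v hv => ?_
    rw [le_sub_comm]
    refine csSup_le (hne _ hy') fun w hw => ?_
    rw [le_sub_iff_add_le']
    exact le_csSup (hbdd _ fun i => add_nonneg (hx' i) (hy' i)) (hadd _ _ _ _ hv hw)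
end

section
/- Fix d ≥ 1 and nonnegative reals a, b, c. There exist nonempty compact subsets A, B of ℝ^d with |A| = a, |B| = b and |A + B| = c if and only if c ≥ (a^{1/d} + b^{1/d})^d. -/
open Pointwise MeasureTheory

lemma cantor_null : volume cantorSet = 0 := by
  have hfin : volume cantorSet ≠ ⊤ := isCompact_cantorSet.measure_lt_top.ne
  have h1 : (fun x : ℝ => x / 3) '' cantorSet = (3⁻¹ : ℝ) • cantorSet := by
    ext x; simp [Set.mem_smul_set, div_eq_inv_mul]
  have h2 : (fun x : ℝ => (2 + x) / 3) '' cantorSet = (2/3 : ℝ) +ᵥ ((3⁻¹ : ℝ) • cantorSet) := by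
    ext x
    constructor
    · rintro ⟨y, hy, rfl⟩
      exact ⟨3⁻¹ * y, ⟨y, hy, rfl⟩, by simp only [vadd_eq_add]; ring⟩
    · rintro ⟨_, ⟨y, hy, rfl⟩, rfl⟩
      exact ⟨y, hy, by simp only [vadd_eq_add, smul_eq_mul]; ring⟩
  have h3 : volume cantorSet ≤ volume ((3⁻¹ : ℝ) • cantorSet) + volume ((3⁻¹ : ℝ) • cantorSet) := by
    conv_lhs => rw [cantorSet_eq_union_halves, h1, h2]
    refine (measure_union_le _ _).trans ?_
    rw [measure_vadd]
  rw [Measure.addHaar_smul] at h3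
  simp only [Module.finrank_self, pow_one] at h3
  have h4 := ENNReal.toReal_mono (by finiteness) h3
  rw [ENNReal.toReal_add (by finiteness) (by finiteness), ENNReal.toReal_mul,
    ENNReal.toReal_ofReal (by positivity), abs_of_pos (by positivity)] at h4
  have h5 : (volume cantorSet).toReal = 0 := by
    have := ENNReal.toReal_nonneg (a := volume cantorSet)
    linarith
  exact (ENNReal.toReal_eq_zero_iff _).1 h5 |>.resolve_right hfin

lemma preCantor_add (n : ℕ) (x : ℝ) (h0 : 0 ≤ x) (h2 : x ≤ 2) :
    ∃ y ∈ preCantorSet n, x - y ∈ preCantorSet n := by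
  induction n generalizing x with
  | zero =>
    refine ⟨x / 2, ?_, ?_⟩ <;> simp only [preCantorSet_zero, Set.mem_Icc] <;> constructor <;> linarith
  | succ n ih =>
    rcases le_total x (2/3) with h | h
    · obtain ⟨y, hy, hy'⟩ := ih (3 * x) (by linarith) (by linarith)
      exact ⟨y / 3, Or.inl ⟨y, hy, rfl⟩, Or.inl ⟨_, hy', by ring⟩⟩
    rcases le_total x (4/3) with h' | h'
    · obtain ⟨y, hy, hy'⟩ := ih (3 * x - 2) (by linarith) (by linarith)
      exact ⟨y / 3, Or.inl ⟨y, hy, rfl⟩, Or.inr ⟨_, hy', by ring⟩⟩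
    · obtain ⟨y, hy, hy'⟩ := ih (3 * x - 4) (by linarith) (by linarith)
      exact ⟨(2 + y) / 3, Or.inr ⟨y, hy, rfl⟩, Or.inr ⟨_, hy', by ring⟩⟩

lemma cantor_add (x : ℝ) (h0 : 0 ≤ x) (h2 : x ≤ 2) :
    ∃ y ∈ cantorSet, x - y ∈ cantorSet := by
  have hcl : ∀ n, IsClosed (preCantorSet n ∩ (fun y => x - y) ⁻¹' preCantorSet n) := fun n =>
    (isClosed_preCantorSet n).inter ((isClosed_preCantorSet n).preimage (by fun_prop))
  have := IsCompact.nonempty_iInter_of_sequence_nonempty_isCompact_isClosed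
    (fun n => preCantorSet n ∩ (fun y => x - y) ⁻¹' preCantorSet n)
    (fun n => Set.inter_subset_inter (preCantorSet_antitone n.le_succ)
      (Set.preimage_mono (preCantorSet_antitone n.le_succ)))
    (fun n => by
      obtain ⟨y, hy, hy'⟩ := preCantor_add n x h0 h2
      exact ⟨y, hy, hy'⟩)
    (isCompact_Icc.of_isClosed_subset (hcl 0) (fun y hy => hy.1)) hcl
  obtain ⟨y, hy⟩ := this
  rw [Set.mem_iInter] at hy
  exact ⟨y, Set.mem_iInter.2 fun n => (hy n).1, Set.mem_iInter.2 fun n => (hy n).2⟩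

lemma exists_null_pair (s l : ℝ) (hl : 0 < l) (hls : 2 * l ≤ s) :
    ∃ K L : Set ℝ, IsCompact K ∧ IsCompact L ∧ volume K = 0 ∧ volume L = 0 ∧
      K ⊆ Set.Icc 0 (s - l) ∧ L ⊆ Set.Icc 0 l ∧
      ∀ x ∈ Set.Icc 0 s, ∃ y ∈ K, ∃ z ∈ L, y + z = x := by
  obtain ⟨N, hN⟩ := exists_nat_gt (s / (2 * l))
  have hN' : s < N * (2 * l) := by rwa [div_lt_iff₀ (by positivity)] at hN
  set F : Set ℝ := (fun i : ℕ => min (i * (2 * l)) (s - 2 * l)) '' (Finset.range (N + 1)) with hF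
  have hFf : F.Finite := (Finset.finite_toSet _).image _
  have hF0 : ∀ f ∈ F, 0 ≤ f ∧ f ≤ s - 2 * l := by
    rintro _ ⟨i, -, rfl⟩
    exact ⟨le_min (by positivity) (by linarith), min_le_right _ _⟩
  have hLc : IsCompact (l • cantorSet) := isCompact_cantorSet.smul l
  have hLn : volume (l • cantorSet) = 0 := by
    rw [Measure.addHaar_smul, cantor_null, mul_zero]
  have hLs : l • cantorSet ⊆ Set.Icc 0 l := by
    rintro _ ⟨y, hy, rfl⟩
    have := cantorSet_subset_unitInterval hy
    simp only [smul_eq_mul]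
    exact ⟨mul_nonneg hl.le this.1, by nlinarith [this.2]⟩
  refine ⟨F + l • cantorSet, l • cantorSet, hFf.isCompact.add hLc, hLc, ?_, hLn, ?_, hLs, ?_⟩
  · have : F + l • cantorSet = ⋃ f ∈ F, f +ᵥ (l • cantorSet) := (Set.iUnion_vadd_set F _).symm
    rw [this, measure_biUnion_null_iff hFf.countable]
    intro f _
    rw [measure_vadd, hLn]
  · rintro _ ⟨f, hf, y, hy, rfl⟩
    have h1 := hF0 f hf
    have h2 := hLs hy
    exact ⟨add_nonneg h1.1 h2.1, by simp only []; linarith [h1.2, h2.2]⟩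
  · rintro x ⟨hx0, hxs⟩
    have : ∃ f ∈ F, f ≤ x ∧ x ≤ f + 2 * l := by
      set i := ⌊x / (2 * l)⌋₊ with hi
      have h1 : (i : ℝ) * (2 * l) ≤ x := by
        have := Nat.floor_le (a := x / (2 * l)) (by positivity)
        rwa [le_div_iff₀ (by positivity)] at this
      have h2 : x < (i + 1 : ℝ) * (2 * l) := by
        have := Nat.lt_floor_add_one (x / (2 * l))
        rwa [div_lt_iff₀ (by positivity)] at this
      have h3 : i < N + 1 := by
        have : (i : ℝ) < N := by
          by_contra hcon
          push Not at hcon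
          nlinarith
        have : i < N := by exact_mod_cast this
        omega
      refine ⟨_, ⟨i, by simpa using h3, rfl⟩, (min_le_left _ _).trans h1, ?_⟩
      rw [← sub_le_iff_le_add]
      exact le_min (by linarith) (by linarith)
    obtain ⟨f, hf, hfx, hxf⟩ := this
    obtain ⟨y, hy, hy'⟩ := cantor_add ((x - f) / l) (div_nonneg (by linarith) hl.le)
      (by rw [div_le_iff₀ hl]; linarith)
    refine ⟨f + l • y, Set.add_mem_add hf ⟨y, hy, rfl⟩, _, ⟨_, hy', rfl⟩, ?_⟩
    simp only [smul_eq_mul]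
    field_simp
    ring

lemma cube_vol (d : ℕ) (r : ℝ) (hr : 0 ≤ r) :
    (volume (Set.univ.pi (fun _ : Fin d => Set.Icc 0 r))).toReal = r ^ d := by
  rw [volume_pi_pi]
  simp [hr]

lemma exists_sets (d : ℕ) (hd : 1 ≤ d) (α β s : ℝ) (hα : 0 ≤ α) (hβ : 0 ≤ β) (hab : β ≤ α)
    (hs : α + β ≤ s) : ∃ A B : Set (Fin d → ℝ),
      A.Nonempty ∧ B.Nonempty ∧ IsCompact A ∧ IsCompact B ∧
      (volume A).toReal = α ^ d ∧ (volume B).toReal = β ^ d ∧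
      (volume (A + B)).toReal = s ^ d := by
  have hd0 : d ≠ 0 := by omega
  rcases eq_or_ne s α with rfl | hne
  · have hb : β = 0 := by linarith
    subst hb
    refine ⟨Set.univ.pi (fun _ : Fin d => Set.Icc 0 s), {0}, ⟨0, fun _ _ => ⟨le_rfl, hα⟩⟩, ⟨0, rfl⟩,
      isCompact_univ_pi fun _ => isCompact_Icc, isCompact_singleton, cube_vol d _ hα, ?_, ?_⟩
    · have : Nonempty (Fin d) := ⟨⟨0, by omega⟩⟩
      simp [hd0]
    · simp only [add_zero, Set.add_singleton, Set.image_id', cube_vol d s hα]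
  have hsα : α < s := lt_of_le_of_ne (by linarith) hne.symm
  set l := min (s - α) (s / 2) with hl
  have hl0 : 0 < l := lt_min (by linarith) (by linarith)
  have hl1 : l ≤ s - α := min_le_left _ _
  have hl2 : l ≤ s / 2 := min_le_right _ _
  have hl3 : β ≤ l := le_min (by linarith) (by linarith)
  obtain ⟨K, L, hK, hL, hK0, hL0, hKs, hLs, hKL⟩ := exists_null_pair s l hl0 (by linarith)
  have key : ∀ (r m : ℝ) (K : Set ℝ), 0 ≤ r → r ≤ m → IsCompact K → volume K = 0 →
      K ⊆ Set.Icc 0 m →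
      (let A := Set.univ.pi (fun _ : Fin d => Set.Icc 0 r) ∪ Set.univ.pi (fun _ : Fin d => K)
      A.Nonempty ∧ IsCompact A ∧ (volume A).toReal = r ^ d ∧ 
        A ⊆ Set.univ.pi (fun _ : Fin d => Set.Icc 0 m)) := by
    intro r m K hr hrm hK hK0 hKm
    refine ⟨⟨0, Or.inl fun _ _ => ⟨le_rfl, hr⟩⟩, (isCompact_univ_pi fun _ => isCompact_Icc).union
      (isCompact_univ_pi fun _ => hK), ?_, Set.union_subset (Set.pi_mono fun _ _ => Set.Icc_subset_Icc_right hrm) (Set.pi_mono fun _ _ => hKm)⟩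
    have : volume (Set.univ.pi (fun _ : Fin d => K)) = 0 := by
      rw [volume_pi_pi]; simp [hK0, hd0]
    rw [← cube_vol d r hr]
    congr 1
    refine le_antisymm ((measure_union_le _ _).trans ?_) (measure_mono Set.subset_union_left)
    rw [this, add_zero]
  obtain ⟨hA1, hA2, hA3, hA4⟩ := key α (s - l) K hα (by linarith) hK hK0 hKs
  obtain ⟨hB1, hB2, hB3, hB4⟩ := key β l L hβ hl3 hL hL0 hLs
  refine ⟨_, _, hA1, hB1, hA2, hB2, hA3, hB3, ?_⟩
  rw [← cube_vol d s (by linarith)]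
  congr 2
  apply Set.Subset.antisymm
  · rintro _ ⟨x, hx, y, hy, rfl⟩ i -
    have h1 := hA4 hx i trivial
    have h2 := hB4 hy i trivial
    simp only [Set.mem_Icc, Pi.add_apply] at *
    constructor <;> linarith
  · intro x hx
    choose y hy z hz hyz using fun i => hKL (x i) (hx i trivial)
    exact ⟨y, Or.inr fun i _ => hy i, z, Or.inr fun i _ => hz i, funext hyz⟩

lemma bm_one_compact (S T : Set ℝ) (hS : IsCompact S) (hT : IsCompact T) (hS0 : S.Nonempty)
    (hT0 : T.Nonempty) : volume S + volume T ≤ volume (S + T) := by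
  obtain ⟨m, hm, hm'⟩ := hS.exists_isGreatest hS0
  obtain ⟨n, hn, hn'⟩ := hT.exists_isLeast hT0
  have h : (n +ᵥ S) ∪ (m +ᵥ T) ⊆ S + T := by
    rintro _ (⟨x, hx, rfl⟩ | ⟨x, hx, rfl⟩)
    · exact ⟨x, hx, n, hn, add_comm _ _⟩
    · exact ⟨m, hm, x, hx, rfl⟩
  refine le_trans ?_ (measure_mono h)
  have hd : AEDisjoint volume (n +ᵥ S) (m +ᵥ T) := by
    refine measure_mono_null (t := {m + n}) ?_ (by simp)
    rintro _ ⟨⟨x, hx, rfl⟩, ⟨y, hy, h⟩⟩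
    simp only [vadd_eq_add, Set.mem_singleton_iff] at *
    have := hm' hx
    have := hn' hy
    linarith
  rw [measure_union₀ (hT.vadd m).measurableSet.nullMeasurableSet hd, measure_vadd, measure_vadd]

lemma bm_one (S T U : Set ℝ) (hS : MeasurableSet S) (hT : MeasurableSet T) (hS0 : S.Nonempty)
    (hT0 : T.Nonempty) (hU : ∀ x ∈ S, ∀ y ∈ T, x + y ∈ U) : volume S + volume T ≤ volume U := by
  rcases eq_or_ne (volume S) 0 with h0 | h0
  · obtain ⟨x, hx⟩ := hS0
    rw [h0, zero_add, ← measure_vadd volume x T]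
    refine measure_mono ?_
    rintro _ ⟨y, hy, rfl⟩
    exact hU x hx y hy
  rcases eq_or_ne (volume T) 0 with h1 | h1
  · obtain ⟨x, hx⟩ := hT0
    rw [h1, add_zero, ← measure_vadd volume x S]
    refine measure_mono ?_
    rintro _ ⟨y, hy, rfl⟩
    simp only [vadd_eq_add]
    rw [add_comm]
    exact hU y hy x hx
  refine le_of_forall_lt fun r hr => ?_
  obtain ⟨u, hu, v, hv, huv⟩ := ENNReal.exists_lt_add_of_lt_add hr h0 h1
  obtain ⟨K, k1, k2, k3⟩ := hS.exists_lt_isCompact hu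
  obtain ⟨L, l1, l2, l3⟩ := hT.exists_lt_isCompact hv
  refine huv.trans_le ((add_le_add k3.le l3.le).trans ((bm_one_compact K L k2 l2
    (nonempty_of_measure_ne_zero (pos_of_gt k3).ne')
    (nonempty_of_measure_ne_zero (pos_of_gt l3).ne')).trans (measure_mono ?_)))
  rintro _ ⟨x, hx, y, hy, rfl⟩
  exact hU x (k1 hx) y (l1 hy)

lemma level_bm (f g h : ℝ → ℝ) (hf : Measurable f) (hg : Measurable g) (hh : Measurable h)
    (hf0 : ∀ x, 0 ≤ f x) (hg0 : ∀ x, 0 ≤ g x) (hh0 : ∀ x, 0 ≤ h x)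
    (hf1 : ∀ x, f x ≤ 1) (hg1 : ∀ x, g x ≤ 1)
    (hf2 : ∀ r < 1, ∃ x, r < f x) (hg2 : ∀ r < 1, ∃ x, r < g x)
    (H : ∀ r, 0 < r → ∀ s t, r < f s → r < g t → r < h (s + t)) :
    (∫⁻ x, ENNReal.ofReal (f x)) + (∫⁻ x, ENNReal.ofReal (g x)) ≤ ∫⁻ x, ENNReal.ofReal (h x) := by
  have hm : Measurable fun t => volume {x | t < f x} :=
    Antitone.measurable fun a b hab => measure_mono fun x hx => lt_of_le_of_lt hab hx
  rw [lintegral_eq_lintegral_meas_lt _ (Filter.Eventually.of_forall hf0) hf.aemeasurable,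
    lintegral_eq_lintegral_meas_lt _ (Filter.Eventually.of_forall hg0) hg.aemeasurable,
    lintegral_eq_lintegral_meas_lt _ (Filter.Eventually.of_forall hh0) hh.aemeasurable,
    ← lintegral_add_left hm]
  refine setLIntegral_mono' measurableSet_Ioi fun r hr => ?_
  rcases lt_or_ge r 1 with h1 | h1
  · exact bm_one _ _ _ (measurableSet_lt measurable_const hf) (measurableSet_lt measurable_const hg)
      (hf2 r h1) (hg2 r h1) fun s hs t ht => H r hr s t hs ht
  · have e1 : {x | r < f x} = ∅ := by
      ext x; simpa using (hf1 x).trans h1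
    have e2 : {x | r < g x} = ∅ := by
      ext x; simpa using (hg1 x).trans h1
    simp [e1, e2]

lemma pl_one (f g h : ℝ → ℝ) (hf : Measurable f) (hg : Measurable g) (hh : Measurable h)
    (hf0 : ∀ x, 0 ≤ f x) (hg0 : ∀ x, 0 ≤ g x) (hh0 : ∀ x, 0 ≤ h x)
    (hf1 : BddAbove (Set.range f)) (hg1 : BddAbove (Set.range g))
    (p q : ℝ) (hp : 0 < p) (hq : 0 < q) (hpq : p + q = 1)
    (H : ∀ s t, f s ^ p * g t ^ q ≤ h (s + t))
    (X Y Z : ℝ) (hX : 0 ≤ X) (hY : 0 ≤ Y) (hZ : 0 ≤ Z)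
    (hfX : ∫⁻ x, ENNReal.ofReal (f x) = ENNReal.ofReal X)
    (hgY : ∫⁻ x, ENNReal.ofReal (g x) = ENNReal.ofReal Y)
    (hhZ : ∫⁻ x, ENNReal.ofReal (h x) = ENNReal.ofReal Z) :
    X ^ p * Y ^ q ≤ p ^ p * q ^ q * Z := by
  have hsup : ∀ (f : ℝ → ℝ) (X : ℝ), (∀ x, 0 ≤ f x) → BddAbove (Set.range f) → 0 ≤ X →
      ∫⁻ x, ENNReal.ofReal (f x) = ENNReal.ofReal X → X ≠ 0 →
      ∃ F : ℝ, 0 < F ∧ (∀ x, f x ≤ F) ∧ ∀ r < F, ∃ x, r < f x := by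
    intro f X hf0 hf1 hX hfX hX0
    refine ⟨⨆ x, f x, ?_, le_ciSup hf1, fun r hr => exists_lt_of_lt_ciSup hr⟩
    by_contra hcon
    have : ∀ x, f x = 0 := fun x => le_antisymm ((le_ciSup hf1 x).trans (not_lt.1 hcon)) (hf0 x)
    simp only [this, ENNReal.ofReal_zero, lintegral_zero] at hfX
    have := ENNReal.ofReal_eq_zero.1 hfX.symm
    exact hX0 (le_antisymm this hX)
  have hRHS : 0 ≤ p ^ p * q ^ q * Z := by positivity
  rcases eq_or_ne X 0 with rfl | hX0
  · rwa [Real.zero_rpow hp.ne', zero_mul]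
  rcases eq_or_ne Y 0 with rfl | hY0
  · rwa [Real.zero_rpow hq.ne', mul_zero]
  obtain ⟨F, hF, hF1, hF2⟩ := hsup f X hf0 hf1 hX hfX hX0
  obtain ⟨G, hG, hG1, hG2⟩ := hsup g Y hg0 hg1 hY hgY hY0
  set W := F ^ p * G ^ q with hW
  have hWp : 0 < W := by positivity
  have hscale : ∀ (f : ℝ → ℝ) (X c : ℝ), Measurable f → 0 < c →
      ∫⁻ x, ENNReal.ofReal (f x) = ENNReal.ofReal X →
      ∫⁻ x, ENNReal.ofReal (f x / c) = ENNReal.ofReal (X / c) := by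
    intro f X c hf hc hfX
    simp only [ENNReal.ofReal_div_of_pos hc]
    simp only [div_eq_mul_inv]
    rw [lintegral_mul_const _ (by fun_prop), hfX]
  have key := level_bm (fun x => f x / F) (fun x => g x / G) (fun x => h x / W)
    (hf.div_const _) (hg.div_const _) (hh.div_const _)
    (fun x => div_nonneg (hf0 x) hF.le) (fun x => div_nonneg (hg0 x) hG.le)
    (fun x => div_nonneg (hh0 x) hWp.le)
    (fun x => (div_le_one hF).2 (hF1 x)) (fun x => (div_le_one hG).2 (hG1 x))
    (fun r hr => by
      obtain ⟨x, hx⟩ := hF2 (r * F) (by nlinarith)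
      exact ⟨x, (lt_div_iff₀ hF).2 hx⟩)
    (fun r hr => by
      obtain ⟨x, hx⟩ := hG2 (r * G) (by nlinarith)
      exact ⟨x, (lt_div_iff₀ hG).2 hx⟩)
    (fun r hr s t hs ht => by
      have h1 : r = r ^ p * r ^ q := by rw [← Real.rpow_add hr, hpq, Real.rpow_one]
      have h2 : r ^ p * r ^ q < (f s / F) ^ p * (g t / G) ^ q :=
        mul_lt_mul'' (Real.rpow_lt_rpow hr.le hs hp) (Real.rpow_lt_rpow hr.le ht hq)
          (by positivity) (by positivity)
      rw [← h1, Real.div_rpow (hf0 s) hF.le, Real.div_rpow (hg0 t) hG.le, div_mul_div_comm] at h2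
      exact h2.trans_le (div_le_div_of_nonneg_right (H s t) hWp.le))
  rw [hscale f X F hf hF hfX, hscale g Y G hg hG hgY, hscale h Z W hh hWp hhZ,
    ← ENNReal.ofReal_add (by positivity) (by positivity),
    ENNReal.ofReal_le_ofReal_iff (by positivity)] at key
  have amgm := Real.geom_mean_le_arith_mean2_weighted hp.le hq.le
    (p₁ := X / F / p) (p₂ := Y / G / q) (by positivity) (by positivity) hpq
  have e : p * (X / F / p) + q * (Y / G / q) = X / F + Y / G := by
    field_simp
  rw [e, Real.div_rpow (by positivity) hp.le, Real.div_rpow (by positivity) hq.le,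
    Real.div_rpow hX hF.le, Real.div_rpow hY hG.le] at amgm
  have h3 := amgm.trans key
  have e2 : X ^ p / F ^ p / p ^ p * (Y ^ q / G ^ q / q ^ q)
      = (X ^ p * Y ^ q) / (p ^ p * q ^ q) / W := by
    rw [hW]; field_simp
  rw [e2, div_le_div_iff_of_pos_right hWp, div_le_iff₀ (by positivity)] at h3
  linarith

/-- slice of a set at first coordinate `t` -/
def slice (d : ℕ) (A : Set (Fin (d + 1) → ℝ)) (t : ℝ) : Set (Fin d → ℝ) :=
  {y | Fin.cons t y ∈ A}

lemma slice_compact (d : ℕ) (A : Set (Fin (d + 1) → ℝ)) (hA : IsCompact A) (t : ℝ) :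
    IsCompact (slice d A t) := by
  have h1 : IsClosed (slice d A t) := hA.isClosed.preimage (f := fun y : Fin d → ℝ =>
    (Fin.cons t y : Fin (d + 1) → ℝ)) (by fun_prop)
  have h2 : IsCompact ((fun x : Fin (d + 1) → ℝ => fun i : Fin d => x i.succ) '' A) :=
    hA.image (by fun_prop)
  refine h2.of_isClosed_subset h1 fun y hy => ⟨_, hy, ?_⟩
  ext i
  simp

lemma slice_facts (d : ℕ) (A : Set (Fin (d + 1) → ℝ)) (hA : IsCompact A) :
    Measurable (fun t => (volume (slice d A t)).toReal) ∧
    BddAbove (Set.range (fun t => (volume (slice d A t)).toReal)) ∧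
    ∫⁻ t, ENNReal.ofReal ((volume (slice d A t)).toReal) = ENNReal.ofReal (volume A).toReal := by
  have hmp := (volume_preserving_piFinSuccAbove (fun _ : Fin (d + 1) => ℝ) 0).symm
  set e := (MeasurableEquiv.piFinSuccAbove (fun _ : Fin (d + 1) => ℝ) 0).symm with he
  have hm : MeasurableSet (e ⁻¹' A) := e.measurable hA.measurableSet
  have hsl : ∀ t, slice d A t = Prod.mk t ⁻¹' (e ⁻¹' A) := by
    intro t
    ext y
    simp [slice, he, MeasurableEquiv.piFinSuccAbove]
    rfl
  refine ⟨?_, ?_, ?_⟩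
  · simp only [hsl]
    exact (measurable_measure_prodMk_left hm).ennreal_toReal
  · have h2 : IsCompact ((fun x : Fin (d + 1) → ℝ => fun i : Fin d => x i.succ) '' A) :=
      hA.image (by fun_prop)
    refine ⟨(volume ((fun x : Fin (d + 1) → ℝ => fun i : Fin d => x i.succ) '' A)).toReal, ?_⟩
    rintro _ ⟨t, rfl⟩
    refine ENNReal.toReal_mono h2.measure_lt_top.ne (measure_mono fun y hy => ⟨_, hy, ?_⟩)
    ext i
    simp
  · simp only [ENNReal.ofReal_toReal (slice_compact d A hA _).measure_lt_top.ne,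
      ENNReal.ofReal_toReal hA.measure_lt_top.ne]
    rw [← hmp.measure_preimage hA.measurableSet.nullMeasurableSet, Measure.volume_eq_prod,
      Measure.prod_apply hm]
    simp only [hsl]

lemma bm_mul (d : ℕ) (p q : ℝ) (hp : 0 < p) (hq : 0 < q) (hpq : p + q = 1)
    (A B : Set (Fin d → ℝ)) (hA : IsCompact A) (hB : IsCompact B) :
    (volume A).toReal ^ p * (volume B).toReal ^ q ≤
      (p ^ p * q ^ q) ^ d * (volume (A + B)).toReal := by
  induction d with
  | zero =>
    rcases A.eq_empty_or_nonempty with rfl | hA0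
    · simp [hp.ne']
    rcases B.eq_empty_or_nonempty with rfl | hB0
    · simp [hq.ne']
    have hu : ∀ A : Set (Fin 0 → ℝ), A.Nonempty → A = Set.univ := fun A hA =>
      Subsingleton.eq_univ_of_nonempty hA
    rw [hu _ (hA0.add hB0), hu A hA0, hu B hB0]
    simp [volume_pi]
  | succ d ih =>
    obtain ⟨fm, fb, fi⟩ := slice_facts d A hA
    obtain ⟨gm, gb, gi⟩ := slice_facts d B hB
    obtain ⟨hm, hb, hi⟩ := slice_facts d (A + B) (hA.add hB)
    have hκ : 0 < (p ^ p * q ^ q) ^ d := by positivity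
    have := pl_one _ _ (fun t => (p ^ p * q ^ q) ^ d * (volume (slice d (A + B) t)).toReal)
      fm gm (hm.const_mul _) (fun _ => ENNReal.toReal_nonneg) (fun _ => ENNReal.toReal_nonneg)
      (fun _ => by positivity) fb gb p q hp hq hpq
      (fun s t => by
        refine (ih _ _ (slice_compact d A hA s) (slice_compact d B hB t)).trans ?_
        refine mul_le_mul_of_nonneg_left (ENNReal.toReal_mono
          (slice_compact d _ (hA.add hB) _).measure_lt_top.ne (measure_mono ?_)) hκ.le
        rintro _ ⟨x, hx, y, hy, rfl⟩
        refine ⟨_, hx, _, hy, ?_⟩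
        ext i
        refine Fin.cases ?_ (fun j => ?_) i <;> simp)
      _ _ ((p ^ p * q ^ q) ^ d * (volume (A + B)).toReal) ENNReal.toReal_nonneg
      ENNReal.toReal_nonneg (by positivity) fi gi
      (by
        simp only [ENNReal.ofReal_mul hκ.le]
        rw [lintegral_const_mul _ (by fun_prop), hi])
    rw [pow_succ]
    linarith

lemma brunn_minkowski (d : ℕ) (hd : 1 ≤ d) (A B : Set (Fin d → ℝ)) (hA : IsCompact A)
    (hB : IsCompact B) (hA0 : A.Nonempty) (hB0 : B.Nonempty) (α β : ℝ) (hα : 0 ≤ α) (hβ : 0 ≤ β)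
    (hAα : (volume A).toReal = α ^ d) (hBβ : (volume B).toReal = β ^ d) :
    (α + β) ^ d ≤ (volume (A + B)).toReal := by
  have hfin : volume (A + B) ≠ ⊤ := (hA.add hB).measure_lt_top.ne
  rcases hα.eq_or_lt with rfl | hα
  · obtain ⟨x, hx⟩ := hA0
    rw [zero_add, ← hBβ, ← measure_vadd volume x B]
    refine ENNReal.toReal_mono hfin (measure_mono ?_)
    rintro _ ⟨y, hy, rfl⟩
    exact ⟨x, hx, y, hy, rfl⟩
  rcases hβ.eq_or_lt with rfl | hβ
  · obtain ⟨x, hx⟩ := hB0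
    rw [add_zero, ← hAα, ← measure_vadd volume x A]
    refine ENNReal.toReal_mono hfin (measure_mono ?_)
    rintro _ ⟨y, hy, rfl⟩
    exact ⟨y, hy, x, hx, add_comm _ _⟩
  have hs : 0 < α + β := by positivity
  set p := α / (α + β) with hp
  set q := β / (α + β) with hq
  have hp0 : 0 < p := by positivity
  have hq0 : 0 < q := by positivity
  have hpq : p + q = 1 := by rw [hp, hq]; field_simp
  have := bm_mul d p q hp0 hq0 hpq A B hA hB
  have e1 : α = p * (α + β) := by rw [hp]; field_simp
  have e2 : β = q * (α + β) := by rw [hq]; field_simp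
  have e3 : α ^ p * β ^ q = p ^ p * q ^ q * (α + β) := by
    have e4 : α ^ p = p ^ p * (α + β) ^ p := by
      rw [← Real.mul_rpow hp0.le hs.le, ← e1]
    have e5 : β ^ q = q ^ q * (α + β) ^ q := by
      rw [← Real.mul_rpow hq0.le hs.le, ← e2]
    have e6 : (α + β) ^ p * (α + β) ^ q = α + β := by
      rw [← Real.rpow_add hs, hpq, Real.rpow_one]
    calc α ^ p * β ^ q = p ^ p * q ^ q * ((α + β) ^ p * (α + β) ^ q) := by rw [e4, e5]; ring
      _ = _ := by rw [e6]
  rw [hAα, hBβ, ← Real.rpow_natCast, ← Real.rpow_natCast, ← Real.rpow_mul hα.le,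
    ← Real.rpow_mul hβ.le, mul_comm (d : ℝ) p, mul_comm (d : ℝ) q, Real.rpow_mul hα.le,
    Real.rpow_mul hβ.le, Real.rpow_natCast, Real.rpow_natCast, ← mul_pow, e3, mul_pow] at this
  exact le_of_mul_le_mul_left this (by positivity)

/-- Observation `obs:L2`: description of the Lyusternik region for two sets.
Given nonnegative reals `a, b, c`, there are nonempty compact sets `A, B ⊆ ℝ^d`
with `|A| = a`, `|B| = b`, `|A + B| = c` if and only if
`c ≥ (a^{1/d} + b^{1/d})^d`. -/
theorem lyusternik_region_two_sets
    (d : ℕ) (hd : 1 ≤ d) (a b c : ℝ) (ha : 0 ≤ a) (hb : 0 ≤ b) (hc : 0 ≤ c) :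
    (∃ A B : Set (Fin d → ℝ),
      A.Nonempty ∧ B.Nonempty ∧ IsCompact A ∧ IsCompact B ∧
      (volume A).toReal = a ∧ (volume B).toReal = b ∧
      (volume (A + B)).toReal = c) ↔
    (a ^ (1 / (d : ℝ)) + b ^ (1 / (d : ℝ))) ^ (d : ℝ) ≤ c := by
  have hd0 : d ≠ 0 := by omega
  rw [Real.rpow_natCast, one_div]
  have hα : 0 ≤ a ^ (d : ℝ)⁻¹ := Real.rpow_nonneg ha _
  have hβ : 0 ≤ b ^ (d : ℝ)⁻¹ := Real.rpow_nonneg hb _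
  have hσ : 0 ≤ c ^ (d : ℝ)⁻¹ := Real.rpow_nonneg hc _
  have hαd : (a ^ (d : ℝ)⁻¹) ^ d = a := Real.rpow_inv_natCast_pow ha hd0
  have hβd : (b ^ (d : ℝ)⁻¹) ^ d = b := Real.rpow_inv_natCast_pow hb hd0
  have hσd : (c ^ (d : ℝ)⁻¹) ^ d = c := Real.rpow_inv_natCast_pow hc hd0
  constructor
  · rintro ⟨A, B, hA0, hB0, hA, hB, h1, h2, h3⟩
    rw [← h3]
    exact brunn_minkowski d hd A B hA hB hA0 hB0 _ _ hα hβ (h1.trans hαd.symm) (h2.trans hβd.symm)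
  · intro h
    have hs : a ^ (d : ℝ)⁻¹ + b ^ (d : ℝ)⁻¹ ≤ c ^ (d : ℝ)⁻¹ := by
      rw [← hσd] at h
      exact le_of_pow_le_pow_left₀ hd0 hσ h
    rcases le_total (b ^ (d : ℝ)⁻¹) (a ^ (d : ℝ)⁻¹) with hle | hle
    · obtain ⟨A, B, hA0, hB0, hA, hB, h1, h2, h3⟩ := exists_sets d hd _ _ _ hα hβ hle hs
      exact ⟨A, B, hA0, hB0, hA, hB, h1.trans hαd, h2.trans hβd, h3.trans hσd⟩
    · obtain ⟨A, B, hA0, hB0, hA, hB, h1, h2, h3⟩ :=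
        exists_sets d hd _ _ _ hβ hα hle ((add_comm _ _).trans_le hs)
      exact ⟨B, A, hB0, hA0, hB, hA, h2.trans hαd, h1.trans hβd, by rw [add_comm, h3, hσd]⟩
end

section
/- For every d ≥ 1 there exist nonempty compact subsets A, B, C of ℝ^d such that |A + B + C| + |A| < |A + B| + |A + C|; that is, the volume functional is not supermodular with respect to Minkowski summation in any dimension. (In dimension 1 one may take A = {0,1} and B = C = [0,1]; in dimension d ≥ 2 one may take A = {0,1,…,k}^d for k large and B = C = [0,1]^d.) -/
open Pointwise MeasureTheory

theorem pi_add_pi_aux {d : ℕ} (s t : Fin d → Set ℝ) :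
    Set.univ.pi s + Set.univ.pi t = Set.univ.pi (fun i => s i + t i) := by
  ext x
  simp only [Set.mem_add, Set.mem_pi, Set.mem_univ, true_implies]
  constructor
  · rintro ⟨y, hy, z, hz, rfl⟩ i
    exact ⟨y i, hy i, z i, hz i, rfl⟩
  · intro h
    choose y hy z hz e using h
    exact ⟨y, hy, z, hz, funext e⟩

theorem vol_aux {d : ℕ} (i0 : Fin d) (S T : Set ℝ) (hT : volume T = 1) :
    volume (Set.univ.pi (fun i => if i = i0 then S else T)) = volume S := by
  rw [volume_pi_pi]
  simp only [apply_ite (volume : Set ℝ → ENNReal), hT]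
  simp

theorem add1_aux : ({0, 1} : Set ℝ) + Set.Icc 0 1 = Set.Icc 0 2 := by
  ext x
  simp only [Set.mem_add, Set.mem_insert_iff, Set.mem_singleton_iff, Set.mem_Icc]
  constructor
  · rintro ⟨y, rfl | rfl, z, ⟨h1, h2⟩, rfl⟩ <;> constructor <;> linarith
  · rintro ⟨h1, h2⟩
    by_cases h : x ≤ 1
    · exact ⟨0, Or.inl rfl, x, ⟨h1, h⟩, by ring⟩
    · exact ⟨1, Or.inr rfl, x - 1, ⟨by linarith, by linarith⟩, by ring⟩

theorem add2_aux : (Set.Icc 0 2 : Set ℝ) + Set.Icc 0 1 = Set.Icc 0 3 := by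
  rw [Set.Icc_add_Icc (by norm_num) (by norm_num)]
  norm_num

/-- In every dimension `d ≥ 1` there are nonempty compact sets `A, B, C ⊆ ℝ^d`
witnessing that volume is not supermodular with respect to Minkowski summation:
`|A + B + C| + |A| < |A + B| + |A + C|`. -/
theorem volume_not_supermodular (d : ℕ) (hd : 1 ≤ d) :
    ∃ A B C : Set (Fin d → ℝ),
      A.Nonempty ∧ B.Nonempty ∧ C.Nonempty ∧
      IsCompact A ∧ IsCompact B ∧ IsCompact C ∧
      (volume (A + B + C)).toReal + (volume A).toReal
        < (volume (A + B)).toReal + (volume (A + C)).toReal := by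
  let i0 : Fin d := ⟨0, hd⟩
  let P : Set ℝ → Set ℝ → Set (Fin d → ℝ) :=
    fun S T => Set.univ.pi (fun i => if i = i0 then S else T)
  have hadd : ∀ S T S' T', P S T + P S' T' = P (S + S') (T + T') := by
    intro S T S' T'
    simp only [P, pi_add_pi_aux]
    congr 1
    funext i
    split_ifs <;> rfl
  have hne : ∀ S T, (0 : ℝ) ∈ S → (0 : ℝ) ∈ T → (P S T).Nonempty := by
    intro S T hS hT
    refine ⟨fun _ => 0, fun i _ => ?_⟩
    dsimp only
    split_ifs <;> assumption
  have hc : ∀ S T, IsCompact S → IsCompact T → IsCompact (P S T) := by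
    intro S T hS hT
    refine isCompact_univ_pi fun i => ?_
    split_ifs <;> assumption
  have hI : volume (Set.Icc (0 : ℝ) 1) = 1 := by simp
  have hA : IsCompact ({0, 1} : Set ℝ) := (Set.toFinite _).isCompact
  have hB := hc (Set.Icc 0 1) {0} isCompact_Icc isCompact_singleton
  have nB := hne (Set.Icc 0 1) {0} (by simp) (by simp)
  refine ⟨P {0, 1} (Set.Icc 0 1), P (Set.Icc 0 1) {0}, P (Set.Icc 0 1) {0},
    hne _ _ (by simp) (by simp), nB, nB, hc _ _ hA isCompact_Icc, hB, hB, ?_⟩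
  have hz : Set.Icc (0 : ℝ) 1 + {0} = Set.Icc 0 1 := by
    rw [Set.singleton_zero, add_zero]
  have hv : ∀ S, volume (P S (Set.Icc 0 1)) = volume S := fun S => vol_aux i0 S _ hI
  have h0 : volume ({0, 1} : Set ℝ) = 0 := (Set.toFinite _).measure_zero _
  rw [hadd, hz, add1_aux, hadd, hz, add2_aux, hv, hv, hv, h0]
  simp only [Real.volume_Icc]
  norm_num
end

section
/- Let S_1, …, S_s be subsets of [M] (repetitions allowed) such that every i ∈ [M] belongs to exactly q of them, and let A_1, …, A_M be nonempty compact subsets of ℝ. Then q · |A_1 + ⋯ + A_M| ≥ Σ_{j=1}^s |Σ_{i∈S_j} A_i|. -/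
open Pointwise MeasureTheory

namespace RegCover

/-- The break points of the slicing. -/
noncomputable def P {M : ℕ} (lo hi : Fin M → ℝ) (S : Finset (Fin M)) (k : ℕ) : ℝ :=
  ∑ j ∈ S, if j.val < k then hi j else lo j

lemma P_mono {M : ℕ} (lo hi : Fin M → ℝ) (h : ∀ i, lo i ≤ hi i) (S : Finset (Fin M)) :
    Monotone (P lo hi S) := by
  intro a b hab
  apply Finset.sum_le_sum
  intro j _
  have := h j
  split_ifs <;> linarith

lemma slice (ν : Measure ℝ) (p : ℕ → ℝ) (hp : Monotone p) (n : ℕ) :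
    ν (Set.Ioc (p 0) (p n)) = ∑ k ∈ Finset.range n, ν (Set.Ioc (p k) (p (k + 1))) := by
  induction n with
  | zero => simp
  | succ n ih =>
    rw [Finset.sum_range_succ, ← ih, ← measure_union _ measurableSet_Ioc,
      Set.Ioc_union_Ioc_eq_Ioc (hp (Nat.zero_le n)) (hp (Nat.le_succ n))]
    exact Set.Ioc_disjoint_Ioc_of_le le_rfl

lemma vol_eq {M : ℕ} (A : Fin M → Set ℝ) (lo hi : Fin M → ℝ) (h : ∀ i, lo i ≤ hi i)
    (hA : ∀ i, A i ⊆ Set.Icc (lo i) (hi i)) (S : Finset (Fin M)) :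
    volume (∑ i ∈ S, A i) = ∑ k : Fin M,
      volume (Set.Ioc (P lo hi S k) (P lo hi S (k + 1)) ∩ (∑ i ∈ S, A i)) := by
  have hsub : (∑ i ∈ S, A i) ⊆ Set.Icc (P lo hi S 0) (P lo hi S M) := by
    intro x hx
    rw [Set.mem_finsetSum] at hx
    obtain ⟨g, hg, rfl⟩ := hx
    constructor
    · apply Finset.sum_le_sum
      intro j hj
      simpa using (hA j (hg hj)).1
    · apply Finset.sum_le_sum
      intro j hj
      simpa using (hA j (hg hj)).2
  have h1 := slice (volume.restrict (∑ i ∈ S, A i)) _ (P_mono lo hi h S) M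
  simp only [Measure.restrict_apply measurableSet_Ioc] at h1
  rw [← Fin.sum_univ_eq_sum_range (fun k => volume (Set.Ioc (P lo hi S k) (P lo hi S (k + 1)) ∩
    (∑ i ∈ S, A i)))] at h1
  rw [← h1]
  have h2 : volume (Set.Ioc (P lo hi S 0) (P lo hi S M) ∩ (∑ i ∈ S, A i))
      = volume (Set.Icc (P lo hi S 0) (P lo hi S M) ∩ (∑ i ∈ S, A i)) :=
    measure_congr (Ioc_ae_eq_Icc.inter (Filter.EventuallyEq.refl _ _))
  rw [h2, Set.inter_eq_right.mpr hsub]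

lemma slice_le {M : ℕ} (A : Fin M → Set ℝ) (lo hi : Fin M → ℝ)
    (hlo : ∀ i, lo i ∈ A i) (hhi : ∀ i, hi i ∈ A i) (S : Finset (Fin M)) (k : Fin M) :
    volume (Set.Ioc (P lo hi S k) (P lo hi S (k + 1)) ∩ (∑ i ∈ S, A i)) ≤
      if k ∈ S then volume (Set.Ioc (P lo hi Finset.univ k) (P lo hi Finset.univ (k + 1)) ∩
        (∑ i, A i)) else 0 := by
  have key : ∀ T : Finset (Fin M), k ∉ T → P lo hi T (k + 1) = P lo hi T k := by
    intro T hk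
    apply Finset.sum_congr rfl
    intro j hj
    have : j.val ≠ k.val := fun e => hk (Fin.ext e ▸ hj)
    have : (j.val < k.val + 1) ↔ j.val < k.val := by omega
    simp only [this]
  split_ifs with hk
  · have e1 : ∀ n, P lo hi Finset.univ n = P lo hi Sᶜ n + P lo hi S n := fun n =>
      (Finset.sum_compl_add_sum S _).symm
    rw [← measure_preimage_add volume (P lo hi Sᶜ k)
      (Set.Ioc (P lo hi Finset.univ k) (P lo hi Finset.univ (k + 1)) ∩ (∑ i, A i))]
    apply measure_mono
    rintro x ⟨⟨hx1, hx2⟩, hx⟩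
    refine ⟨⟨?_, ?_⟩, ?_⟩
    · rw [e1]; linarith
    · rw [e1, key Sᶜ (by simpa using hk)]; linarith
    · rw [← Finset.sum_compl_add_sum S A]
      refine Set.add_mem_add ?_ hx
      apply Set.finsetSum_mem_finsetSum
      intro i _
      split_ifs
      · exact hhi i
      · exact hlo i
  · rw [key S hk]; simp

end RegCover

/-- The regular-covering form of fractional superadditivity on the real line:
if the sequence `S_1, …, S_s` covers `[M]` exactly `q` times, then
`q·|A_1 + ⋯ + A_M| ≥ Σ_j |Σ_{i ∈ S_j} A_i|`. -/
theorem regular_cover_superadditivity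
    (M s q : ℕ) (hM : 1 ≤ M)
    (S : Fin s → Finset (Fin M))
    (hcover : ∀ i : Fin M, (Finset.univ.filter (fun j => i ∈ S j)).card = q)
    (A : Fin M → Set ℝ)
    (hne : ∀ i, (A i).Nonempty)
    (hcpt : ∀ i, IsCompact (A i)) :
    ∑ j : Fin s, (volume (∑ i ∈ S j, A i)).toReal
      ≤ (q : ℝ) * (volume (∑ i : Fin M, A i)).toReal := by
  have hc : ∀ T : Finset (Fin M), IsCompact (∑ i ∈ T, A i) := by
    intro T
    induction T using Finset.induction_on with
    | empty => simp
    | insert a T ha ih => rw [Finset.sum_insert ha]; exact (hcpt a).add ih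
  have hlo : ∀ i, sInf (A i) ∈ A i := fun i => (hcpt i).sInf_mem (hne i)
  have hhi : ∀ i, sSup (A i) ∈ A i := fun i => (hcpt i).sSup_mem (hne i)
  have hA : ∀ i, A i ⊆ Set.Icc (sInf (A i)) (sSup (A i)) := fun i x hx =>
    ⟨csInf_le (hcpt i).bddBelow hx, le_csSup (hcpt i).bddAbove hx⟩
  have hle : ∀ i, sInf (A i) ≤ sSup (A i) := fun i => (hA i (hlo i)).2
  have main : ∑ j : Fin s, volume (∑ i ∈ S j, A i) ≤ (q : ENNReal) * volume (∑ i, A i) := by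
    calc ∑ j : Fin s, volume (∑ i ∈ S j, A i)
        ≤ ∑ j : Fin s, ∑ k : Fin M, _ := by
          apply Finset.sum_le_sum
          intro j _
          refine (RegCover.vol_eq A _ _ hle hA (S j)).le.trans ?_
          exact Finset.sum_le_sum fun k _ => RegCover.slice_le A _ _ hlo hhi (S j) k
      _ = _ := by
          rw [Finset.sum_comm, RegCover.vol_eq A _ _ hle hA Finset.univ, Finset.mul_sum]
          apply Finset.sum_congr rfl
          intro k _
          rw [← Finset.sum_filter, Finset.sum_const, hcover k, nsmul_eq_mul]
  rw [← ENNReal.toReal_sum (fun j _ => (hc (S j)).measure_lt_top.ne)]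
  have := ENNReal.toReal_mono
    (ENNReal.mul_ne_top (ENNReal.natCast_ne_top q) (hc Finset.univ).measure_lt_top.ne) main
  simpa [ENNReal.toReal_mul] using this
end

section
/- Let A_1, A_2, A_3 be nonempty compact subsets of ℝ. Then 2 |A_1 + A_2 + A_3| ≥ |A_1 + A_2| + |A_2 + A_3| + |A_1 + A_3|. -/
open Pointwise MeasureTheory

lemma glue_aux (X Y T : Set ℝ) (u v c : ℝ) (hX : ∀ x ∈ X, x + u ∈ T ∧ x + u ≤ c)
    (hY : ∀ y ∈ Y, y + v ∈ T ∧ c ≤ y + v) : volume X + volume Y ≤ volume T := by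
  have e1 : volume X ≤ volume (T ∩ Set.Iic c) := by
    rw [← measure_preimage_add_right volume u (T ∩ Set.Iic c)]
    exact measure_mono fun x hx => hX x hx
  have e2 : volume Y ≤ volume (T \ Set.Iic c) := by
    have h : volume (T \ Set.Iic c) = volume (T ∩ Set.Ici c) := by
      apply measure_congr
      rw [Set.diff_eq, Set.compl_Iic]
      exact (Filter.EventuallyEq.refl _ T).inter Ioi_ae_eq_Ici
    rw [h, ← measure_preimage_add_right volume v (T ∩ Set.Ici c)]
    exact measure_mono fun x hx => hY x hx
  calc _ ≤ _ := add_le_add e1 e2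
    _ = _ := measure_inter_add_diff T measurableSet_Iic

/-- The leave-one-out fractional superadditivity for three compact subsets of `ℝ`:
`2|A₁ + A₂ + A₃| ≥ |A₁ + A₂| + |A₂ + A₃| + |A₁ + A₃|`. -/
theorem leave_one_out_three_sets
    (A₁ A₂ A₃ : Set ℝ)
    (h₁ : A₁.Nonempty) (h₂ : A₂.Nonempty) (h₃ : A₃.Nonempty)
    (hc₁ : IsCompact A₁) (hc₂ : IsCompact A₂) (hc₃ : IsCompact A₃) :
    (volume (A₁ + A₂)).toReal + (volume (A₂ + A₃)).toReal
        + (volume (A₁ + A₃)).toReal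
      ≤ 2 * (volume (A₁ + A₂ + A₃)).toReal := by
  obtain ⟨m₁, hm₁, lm₁⟩ := hc₁.exists_isLeast h₁
  obtain ⟨m₃, hm₃, lm₃⟩ := hc₃.exists_isLeast h₃
  obtain ⟨M₁, hM₁, uM₁⟩ := hc₁.exists_isGreatest h₁
  obtain ⟨M₂, hM₂, uM₂⟩ := hc₂.exists_isGreatest h₂
  have k1 : volume (A₁ + A₂) + volume ((A₂ + A₃) \ Set.Iic (M₂ + m₃))
      ≤ volume (A₁ + A₂ + A₃) := by
    apply glue_aux _ _ _ m₃ M₁ (M₁ + M₂ + m₃)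
    · rintro _ ⟨a, ha, b, hb, rfl⟩
      refine ⟨⟨a + b, ⟨a, ha, b, hb, rfl⟩, m₃, hm₃, rfl⟩, ?_⟩
      have := uM₁ ha
      have := uM₂ hb
      simp only
      linarith
    · rintro _ ⟨⟨b, hb, c, hc, rfl⟩, h⟩
      refine ⟨⟨M₁ + b, ⟨M₁, hM₁, b, hb, rfl⟩, c, hc, by simp only; ring⟩, ?_⟩
      simp only [Set.mem_Iic, not_le] at h
      simp only
      linarith
  have k2 : volume ((A₂ + A₃) ∩ Set.Iic (M₂ + m₃)) + volume (A₁ + A₃)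
      ≤ volume (A₁ + A₂ + A₃) := by
    apply glue_aux _ _ _ m₁ M₂ (m₁ + M₂ + m₃)
    · rintro _ ⟨⟨b, hb, c, hc, rfl⟩, h⟩
      refine ⟨⟨m₁ + b, ⟨m₁, hm₁, b, hb, rfl⟩, c, hc, by simp only; ring⟩, ?_⟩
      simp only [Set.mem_Iic] at h
      simp only
      linarith
    · rintro _ ⟨a, ha, c, hc, rfl⟩
      refine ⟨⟨a + M₂, ⟨a, ha, M₂, hM₂, rfl⟩, c, hc, by simp only; ring⟩, ?_⟩
      have := lm₁ ha
      have := lm₃ hc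
      simp only
      linarith
  have k3 := measure_inter_add_diff (μ := volume) (A₂ + A₃)
    (measurableSet_Iic (a := M₂ + m₃))
  have f12 := (hc₁.add hc₂).measure_ne_top (μ := volume)
  have f23 := (hc₂.add hc₃).measure_ne_top (μ := volume)
  have f13 := (hc₁.add hc₃).measure_ne_top (μ := volume)
  have f := ((hc₁.add hc₂).add hc₃).measure_ne_top (μ := volume)
  have k : volume (A₁ + A₂) + volume (A₂ + A₃) + volume (A₁ + A₃)
      ≤ 2 * volume (A₁ + A₂ + A₃) := by
    rw [← k3, two_mul]
    refine le_trans (le_of_eq ?_) (add_le_add k1 k2)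
    ring
  have := ENNReal.toReal_mono (ENNReal.mul_ne_top (by simp) f) k
  rwa [ENNReal.toReal_add (by simp [f12, f23]) f13, ENNReal.toReal_add f12 f23,
    ENNReal.toReal_mul, ENNReal.toReal_ofNat] at this
end

section
/- Let A = [0, 1/2] ∪ [1, 3/2] ⊆ ℝ. Then |A + A + A| = (3/2)|A + A|; explicitly, |A + A| = 3 and |A + A + A| = 9/2. In particular, equality holds for this non-convex set A in the fractional superadditivity inequality |A_1 + A_2 + A_3| ≥ (1/2)(|A_1 + A_2| + |A_2 + A_3| + |A_1 + A_3|) with A_1 = A_2 = A_3 = A. -/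
open Pointwise MeasureTheory

/-- For the non-convex set `A = [0, 1/2] ∪ [1, 3/2]` one has `|A + A| = 3`,
`|A + A + A| = 9/2`, so `|A + A + A| = (3/2)|A + A|`: equality holds in the
fractional superadditivity inequality
`|A₁+A₂+A₃| ≥ (1/2)(|A₁+A₂| + |A₂+A₃| + |A₁+A₃|)` with `A₁ = A₂ = A₃ = A`. -/
theorem equality_case_nonconvex_example
    (A : Set ℝ) (hA : A = Set.Icc (0 : ℝ) (1 / 2) ∪ Set.Icc (1 : ℝ) (3 / 2)) :
    (volume (A + A)).toReal = 3 ∧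
    (volume (A + A + A)).toReal = 9 / 2 ∧
    (volume (A + A + A)).toReal = (3 / 2) * (volume (A + A)).toReal := by
  have h2 : A + A = Set.Icc (0 : ℝ) 3 := by
    subst hA
    ext x
    simp only [Set.mem_add, Set.mem_union, Set.mem_Icc]
    constructor
    · rintro ⟨a, ha, b, hb, rfl⟩
      rcases ha with ha | ha <;> rcases hb with hb | hb <;> constructor <;> linarith [ha.1, ha.2, hb.1, hb.2]
    · rintro ⟨h0, h3⟩
      by_cases h1 : x ≤ 1
      · exact ⟨x / 2, Or.inl ⟨by linarith, by linarith⟩, x / 2, Or.inl ⟨by linarith, by linarith⟩, by ring⟩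
      · by_cases h2 : x ≤ 2
        · exact ⟨1 + (x - 1) / 2, Or.inr ⟨by linarith, by linarith⟩, (x - 1) / 2,
            Or.inl ⟨by linarith, by linarith⟩, by ring⟩
        · exact ⟨x / 2, Or.inr ⟨by linarith, by linarith⟩, x / 2,
            Or.inr ⟨by linarith, by linarith⟩, by ring⟩
  have h3 : A + A + A = Set.Icc (0 : ℝ) (9 / 2) := by
    rw [h2]
    subst hA
    ext x
    simp only [Set.mem_add, Set.mem_union, Set.mem_Icc]
    constructor
    · rintro ⟨a, ha, b, hb, rfl⟩
      rcases hb with hb | hb <;> constructor <;> linarith [ha.1, ha.2, hb.1, hb.2]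
    · rintro ⟨h0, h3⟩
      by_cases h1 : x ≤ 3
      · exact ⟨x, ⟨h0, h1⟩, 0, Or.inl ⟨by norm_num, by norm_num⟩, by ring⟩
      · exact ⟨x - 3 / 2, ⟨by linarith, by linarith⟩, 3 / 2,
          Or.inr ⟨by norm_num, by norm_num⟩, by ring⟩
  have v2 : (volume (A + A)).toReal = 3 := by
    rw [h2, Real.volume_Icc, ENNReal.toReal_ofReal] <;> norm_num
  have v3 : (volume (A + A + A)).toReal = 9 / 2 := by
    rw [h3, Real.volume_Icc, ENNReal.toReal_ofReal] <;> norm_num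
  refine ⟨v2, v3, ?_⟩
  rw [v2, v3]
  norm_num
end
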